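/- For every integer d ≥ 1, the genus 2 Hurwitz numbers satisfy the recursion H_{2,d} = d² · ((97/136)d − 20/17) · H_{1,d} + ∑_{i=1}^{d−1} binom(2d, 2i−2) · (8d − (115/17)i) · i · (d−i) · H_{0,i} · H_{2,d−i} + ∑_{i=1}^{d−1} binom(2d, 2i) · ((11697/34) · i(d−i) − (3899/68) · d²) · i · (d−i) · H_{1,i} · H_{1,d−i} in ℚ. (This recursion was conjectured by Graber and the second author and established by Goulden and Jackson.) -/

import Mathlib

/-!
Multiplication by the sum of all transpositions acts on symmetric polynomials, via the Frobenius
characteristic, by the cut-and-join operator. After multiplication by the Vandermonde polynomial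
this operator becomes diagonal on monomials, with the content sums as eigenvalues; extracting one
coefficient gives Frobenius' formula for the number of factorizations of the identity.

With `D = y d/dy`, the generating series `τ` of all branched covers, `y` marking the degree and `u`
the branch points, is by this formula a limit of normalized leading minors of an explicit symmetric
matrix with `D M i j = M (i + 1) j + i * M i j`. Hence the Desnanot-Jacobi identity is the Toda
equation for `τ`, which in terms of the series `H = log τ` of connected covers implies
`D E = E * Δ (D H)` for `y E = D² H`, where `Δ F` is the second difference
`F (exp u * y) - 2 F (y) + F (exp (-u) * y)`.

Splitting by genus, genus `0` yields the tree function `T = D² H₀`, and each further genus a linear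
equation for `D² H_g`. With `P = (1 - T)⁻¹`, which satisfies `D P = P³ - P²`, its solutions are
polynomials in `P` for `g = 1, 2`, and the recursion becomes a polynomial identity in `P`.
-/

/-- The number of `r`-tuples `(τ₁, …, τ_r)` of transpositions in the symmetric group on
`d` letters whose product `τ₁ ⬝ τ₂ ⋯ τ_r` is the identity and which generate a subgroup
acting transitively on the `d` letters. -/
noncomputable def hurwitzTupleCount (d r : ℕ) : ℕ :=
  Nat.card {τ : Fin r → Equiv.Perm (Fin d) //
    (∀ i, (τ i).IsSwap) ∧ (List.ofFn τ).prod = 1 ∧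
    ∀ x y : Fin d, ∃ σ ∈ Subgroup.closure (Set.range τ), σ x = y}

/-- The Hurwitz number `H_{g,d}`: `1/d!` times the number of `(2g - 2 + 2d)`-tuples of
transpositions in `S_d` with product the identity, generating a transitive subgroup. -/
noncomputable def hurwitzNumber (g d : ℕ) : ℚ :=
  (hurwitzTupleCount d (2 * g + 2 * d - 2) : ℚ) / (Nat.factorial d : ℚ)

namespace HurwitzToda

open Finset Equiv
open scoped Nat

section Polynomials

open MvPolynomial

section Derivations

variable {k A ι : Type*} [CommRing k] [CommRing A] [Algebra k A] [DecidableEq ι]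

theorem derivation_prod (D : Derivation k A A) (s : Finset ι) (f : ι → A) :
    D (∏ i ∈ s, f i) = ∑ i ∈ s, (∏ j ∈ s.erase i, f j) * D (f i) := by
  induction s using Finset.induction_on with
  | empty => simp
  | insert a s ha ih =>
    rw [prod_insert ha, D.leibniz, ih, sum_insert ha, erase_insert ha, smul_eq_mul, smul_eq_mul,
      add_comm, mul_sum]
    congr 1
    refine sum_congr rfl fun i hi => ?_
    have hia : a ≠ i := fun h => ha (h ▸ hi)
    rw [erase_insert_of_ne hia, prod_insert (fun h => ha (mem_of_mem_erase h)), mul_assoc]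

end Derivations

section Euler

variable {ι R : Type*} [CommRing R]

/-- The Euler operator `xᵢ ∂/∂xᵢ`; the monomials are its eigenvectors. -/
noncomputable def euler (i : ι) : Derivation R (MvPolynomial ι R) (MvPolynomial ι R) :=
  X (R := R) i • pderiv i

theorem euler_apply (i : ι) (f : MvPolynomial ι R) : euler i f = X i * pderiv i f := rfl

theorem euler_monomial (i : ι) (m : ι →₀ ℕ) (r : R) :
    euler i (monomial m r) = (m i : R) • monomial m r := by
  rw [euler_apply, X_mul_pderiv_monomial, Nat.cast_smul_eq_nsmul]

theorem coeff_euler (i : ι) (m : ι →₀ ℕ) (f : MvPolynomial ι R) :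
    coeff m (euler i f) = m i * coeff m f := by
  classical
  induction f using MvPolynomial.induction_on' with
  | monomial u c =>
    rw [euler_monomial, coeff_smul, coeff_monomial]
    split_ifs with h
    · rw [h, smul_eq_mul]
    · simp
  | add p q hp hq => rw [map_add, coeff_add, coeff_add, hp, hq, mul_add]

theorem euler_euler_mul (i : ι) (f g : MvPolynomial ι R) :
    euler i (euler i (f * g)) =
      euler i (euler i f) * g + 2 * (euler i f * euler i g) + f * euler i (euler i g) := by
  simp only [Derivation.leibniz, map_add, smul_eq_mul]
  ring

end Euler

section Vandermonde

variable {R : Type*} [CommRing R] {N : ℕ}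

/-- The Vandermonde polynomial `∏_{i < j} (xⱼ - xᵢ)`. -/
noncomputable def vandermondePoly (N : ℕ) (R : Type*) [CommRing R] : MvPolynomial (Fin N) R :=
  (Matrix.vandermonde X).det

/-- The exponent of the monomial `∏ xᵢ ^ κ(i)` occurring in the Vandermonde polynomial. -/
noncomputable def staircase (κ : Perm (Fin N)) : Fin N →₀ ℕ :=
  Finsupp.equivFunOnFinite.symm fun i => κ i

@[simp] theorem staircase_apply (κ : Perm (Fin N)) (i : Fin N) : staircase κ i = κ i := rfl

theorem sum_staircase (κ : Perm (Fin N)) : ∑ i, staircase κ i = ∑ i ∈ range N, i := by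
  simp only [staircase_apply]
  rw [Equiv.sum_comp κ (fun x => (x : ℕ)), Fin.sum_univ_eq_sum_range (fun x => x)]

theorem vandermondePoly_eq_sum :
    vandermondePoly N R =
      ∑ κ : Perm (Fin N), ((Perm.sign κ : ℤ) : R) • monomial (staircase κ) (1 : R) := by
  rw [vandermondePoly, ← Matrix.det_transpose, Matrix.det_apply']
  refine sum_congr rfl fun κ _ => ?_
  rw [monomial_eq, Finsupp.prod_fintype _ _ (by simp), smul_eq_C_mul]
  simp [Matrix.vandermonde_apply]

theorem sum_euler_euler_vandermondePoly :
    ∑ i, euler i (euler i (vandermondePoly N R)) =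
      (∑ k ∈ range N, (k : R) ^ 2) • vandermondePoly N R := by
  simp only [vandermondePoly_eq_sum, map_sum, smul_sum, Derivation.map_smul, euler_monomial]
  rw [sum_comm]
  refine sum_congr rfl fun κ _ => ?_
  simp only [smul_smul, ← sum_smul]
  rw [← Fin.sum_univ_eq_sum_range fun k => (k : R) ^ 2,
    ← Equiv.sum_comp κ fun k : Fin N => ((k : ℕ) : R) ^ 2, sum_mul]
  exact congrArg (· • _) (sum_congr rfl fun i _ => by rw [staircase_apply]; ring)

/-- The pairs `i < j`, which index the linear factors of the Vandermonde polynomial. -/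
def increasingPairs (N : ℕ) : Finset (Fin N × Fin N) := {e | e.1 < e.2}

theorem vandermondePoly_eq_prod :
    vandermondePoly N R = ∏ e ∈ increasingPairs N, (X e.2 - X e.1) := by
  rw [vandermondePoly, Matrix.det_vandermonde, increasingPairs, prod_filter, ← univ_product_univ,
    prod_product]
  refine prod_congr rfl fun i _ => ?_
  rw [← prod_filter]
  exact prod_congr (by ext; simp) fun _ _ => rfl

/-- The product of all linear factors of the Vandermonde polynomial other than that of `e`. -/
noncomputable def vandermondeCofactor (R : Type*) [CommRing R] (e : Fin N × Fin N) :
    MvPolynomial (Fin N) R :=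
  ∏ e' ∈ (increasingPairs N).erase e, (X e'.2 - X e'.1)

/-- The quotient of the Vandermonde polynomial by `xᵢ - xⱼ`, or `0` if `i = j`. -/
noncomputable def vandermondeQuotient (R : Type*) [CommRing R] (i j : Fin N) :
    MvPolynomial (Fin N) R :=
  (if j < i then vandermondeCofactor R (j, i) else 0) -
    if i < j then vandermondeCofactor R (i, j) else 0

theorem sub_mul_vandermondeCofactor {i j : Fin N} (h : i < j) :
    (X j - X i) * vandermondeCofactor R (i, j) = vandermondePoly N R := by
  have hmem : (i, j) ∈ increasingPairs N := by simpa [increasingPairs] using h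
  rw [vandermondePoly_eq_prod, vandermondeCofactor, ← mul_prod_erase _ _ hmem]

theorem sub_mul_vandermondeQuotient {i j : Fin N} (h : i ≠ j) :
    (X i - X j) * vandermondeQuotient R i j = vandermondePoly N R := by
  rcases h.lt_or_gt with h | h
  · rw [vandermondeQuotient, if_pos h, if_neg h.not_gt, ← sub_mul_vandermondeCofactor h]
    ring
  · rw [vandermondeQuotient, if_pos h, if_neg h.not_gt, ← sub_mul_vandermondeCofactor h, sub_zero]

theorem vandermondeQuotient_swap (i j : Fin N) :
    vandermondeQuotient R j i = -vandermondeQuotient R i j :=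
  (neg_sub _ _).symm

theorem vandermondeQuotient_self (i : Fin N) : vandermondeQuotient R i i = 0 := by
  simp [vandermondeQuotient]

theorem pderiv_vandermondePoly (i : Fin N) :
    pderiv i (vandermondePoly N R) = ∑ j, vandermondeQuotient R i j := by
  have hfactor (e : Fin N × Fin N) : pderiv i (X e.2 - X e.1 : MvPolynomial (Fin N) R) =
      (if e.2 = i then 1 else 0) - if e.1 = i then 1 else 0 := by
    simp only [map_sub, pderiv_X, Pi.single_apply, eq_comm]
  simp only [vandermondePoly_eq_prod, derivation_prod, hfactor, mul_sub, vandermondeQuotient,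
    sum_sub_distrib, mul_ite, mul_one, mul_zero]
  simp only [increasingPairs, sum_filter, ← univ_product_univ]
  congr 1
  · rw [sum_product]
    refine sum_congr rfl fun j _ => ?_
    rw [sum_eq_single i (fun k _ hk => by simp [hk]) (by simp)]
    simp [vandermondeCofactor, increasingPairs]
  · rw [sum_product_right]
    refine sum_congr rfl fun j _ => ?_
    rw [sum_eq_single i (fun k _ hk => by simp [hk]) (by simp)]
    simp [vandermondeCofactor, increasingPairs]

end Vandermonde

section PowerSums

variable {α ι R : Type*} [Fintype α] [CommRing R]

/-- The monomial `∏ₛ x_{w(s)}` recording how often each letter occurs in the word `w`. -/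
noncomputable def wordMonomial (R : Type*) [CommRing R] (w : α → ι) : MvPolynomial ι R :=
  ∏ s, X (w s)

theorem euler_wordMonomial [DecidableEq ι] (i : ι) (w : α → ι) :
    euler i (wordMonomial R w) = ∑ s, if w s = i then wordMonomial R w else 0 := by
  classical
  rw [wordMonomial, derivation_prod]
  refine sum_congr rfl fun s _ => ?_
  rw [euler_apply, pderiv_X, Pi.single_apply]
  split_ifs with h
  · rw [mul_one, ← h, mul_comm, mul_prod_erase univ (fun s => X (w s)) (mem_univ s)]
  · simp

theorem X_mul_wordMonomial [DecidableEq α] (i : ι) (w : α → ι) (s : α) :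
    X i * wordMonomial R w = X (w s) * wordMonomial R (Function.update w s i) := by
  have hrest : ∏ u ∈ univ.erase s, X (R := R) (Function.update w s i u) =
      ∏ u ∈ univ.erase s, X (w u) :=
    prod_congr rfl fun u hu => by rw [Function.update_of_ne (ne_of_mem_erase hu)]
  rw [wordMonomial, wordMonomial, ← mul_prod_erase univ (fun u => X (w u)) (mem_univ s),
    ← mul_prod_erase univ (fun u => X (Function.update w s i u)) (mem_univ s), hrest,
    Function.update_self]
  ring

variable [DecidableEq α] [Fintype ι] [DecidableEq ι]

/-- The words constant along the cycles of `σ`. -/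
def invariantWords (ι : Type*) [Fintype ι] [DecidableEq ι] (σ : Perm α) : Finset (α → ι) :=
  {w | ∀ u, w (σ u) = w u}

@[simp]
theorem mem_invariantWords {σ : Perm α} {w : α → ι} :
    w ∈ invariantWords ι σ ↔ ∀ u, w (σ u) = w u :=
  mem_filter_univ w

/-- The power-sum symmetric polynomial `p_λ`, where `λ` is the cycle type of `σ`. -/
noncomputable def permPsum (ι R : Type*) [Fintype ι] [DecidableEq ι] [CommRing R] (σ : Perm α) :
    MvPolynomial ι R :=
  ∑ w ∈ invariantWords ι σ, wordMonomial R w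

variable (σ : Perm α)

theorem euler_permPsum (i : ι) :
    euler i (permPsum ι R σ) =
      ∑ s, ∑ w ∈ invariantWords ι σ, if w s = i then wordMonomial R w else 0 := by
  simp only [permPsum, map_sum, euler_wordMonomial]
  exact sum_comm

theorem sum_euler_permPsum :
    ∑ i, euler i (permPsum ι R σ) = Fintype.card α • permPsum ι R σ := by
  simp only [euler_permPsum]
  rw [sum_comm]
  simp [permPsum, sum_comm (s := univ (α := ι))]

theorem euler_euler_permPsum (i : ι) :
    euler i (euler i (permPsum ι R σ)) =
      ∑ s, ∑ t, ∑ w ∈ invariantWords ι σ, if w s = i ∧ w t = i then wordMonomial R w else 0 := by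
  simp only [euler_permPsum, map_sum, apply_ite (euler i), map_zero, euler_wordMonomial]
  refine sum_congr rfl fun s _ => ?_
  rw [sum_comm]
  refine sum_congr rfl fun w _ => ?_
  split_ifs with h <;> simp [h]

/-- The triples `(s, t, w)` in which `w` is constant along the cycles of `σ (s t)` and takes the
values `i` and `j` at `s` and `t`. -/
def cutJoinTriples (i j : ι) : Finset (α × α × (α → ι)) :=
  {x | x.2.2 ∈ invariantWords ι (σ * swap x.1 x.2.1) ∧ x.2.2 x.1 = i ∧ x.2.2 x.2.1 = j}

/-- The contribution of `cutJoinTriples σ i j` to the sum of `permPsum (σ (s t))` over `s, t`. -/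
noncomputable def cutJoinSum (R : Type*) [CommRing R] (i j : ι) : MvPolynomial ι R :=
  ∑ x ∈ cutJoinTriples σ i j, wordMonomial R x.2.2

theorem cutJoinSum_eq_sum (i j : ι) :
    cutJoinSum σ R i j = ∑ s, ∑ t, ∑ w ∈ invariantWords ι (σ * swap s t),
      if w s = i ∧ w t = j then wordMonomial R w else 0 := by
  simp only [cutJoinSum, cutJoinTriples, sum_filter, Fintype.sum_prod_type]
  simp only [← sum_filter]
  exact sum_congr rfl fun s _ => sum_congr rfl fun t _ => sum_congr (by ext; simp) fun _ _ => rfl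

theorem sum_permPsum_mul_swap :
    ∑ s, ∑ t, permPsum ι R (σ * swap s t) = ∑ i, ∑ j, cutJoinSum σ R i j := by
  have hfiber (s t : α) : permPsum ι R (σ * swap s t) =
      ∑ i, ∑ j, ∑ w ∈ invariantWords ι (σ * swap s t),
        if w s = i ∧ w t = j then wordMonomial R w else 0 := by
    rw [permPsum, ← sum_fiberwise _ fun w => w s]
    refine sum_congr rfl fun i _ => ?_
    rw [← sum_fiberwise _ fun w => w t]
    simp only [← sum_filter, filter_filter]
  simp only [hfiber, cutJoinSum_eq_sum]
  calc _ = ∑ s, ∑ i, ∑ t, ∑ j, _ := sum_congr rfl fun s _ => sum_comm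
    _ = ∑ i, ∑ s, ∑ t, ∑ j, _ := sum_comm
    _ = ∑ i, ∑ s, ∑ j, ∑ t, _ := sum_congr rfl fun i _ => sum_congr rfl fun s _ => sum_comm
    _ = _ := sum_congr rfl fun i _ => sum_comm

theorem cutJoinSum_self (i : ι) : cutJoinSum σ R i i = euler i (euler i (permPsum ι R σ)) := by
  rw [cutJoinSum_eq_sum, euler_euler_permPsum]
  refine sum_congr rfl fun s _ => sum_congr rfl fun t _ => ?_
  rw [← sum_filter, ← sum_filter]
  refine sum_congr (Finset.ext fun w => ?_) fun _ _ => rfl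
  rw [mem_filter, mem_filter, mem_invariantWords, mem_invariantWords]
  refine and_congr_left fun ⟨hs, ht⟩ => ?_
  have hswap (u : α) : w (swap s t u) = w u := by rw [swap_apply_def]; split_ifs <;> simp_all
  rw [← (swap s t).forall_congr_right]
  simp only [Perm.mul_apply, swap_apply_self, hswap]

/-- The triples `(s, s, w)` in which `w` is constant along the cycles of `σ` and `w s = i`. -/
def diagonalTriples (i : ι) : Finset (α × α × (α → ι)) :=
  {x | x.2.2 ∈ invariantWords ι σ ∧ x.2.2 x.1 = i ∧ x.1 = x.2.1}

theorem sum_diagonalTriples (i : ι) :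
    ∑ x ∈ diagonalTriples σ i, wordMonomial R x.2.2 = euler i (permPsum ι R σ) := by
  simp only [euler_permPsum, diagonalTriples, sum_filter, Fintype.sum_prod_type]
  refine sum_congr rfl fun s _ => ?_
  rw [sum_comm]
  simp only [ite_and, sum_ite_irrel, sum_ite_eq, mem_univ, if_true, sum_const_zero]
  rw [← sum_filter, filter_univ_mem]

theorem mem_invariantWords_mul_swap {s t : α} {w : α → ι} :
    w ∈ invariantWords ι (σ * swap s t) ↔
      w (σ s) = w t ∧ w (σ t) = w s ∧ ∀ u, u ≠ s → u ≠ t → w (σ u) = w u := by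
  rw [mem_invariantWords]
  constructor
  · intro h
    refine ⟨by simpa using h t, by simpa using h s, fun u hs ht => ?_⟩
    simpa only [Perm.mul_apply, swap_apply_of_ne_of_ne hs ht] using h u
  · rintro ⟨hs, ht, h⟩ u
    rw [Perm.mul_apply, swap_apply_def]
    split_ifs with hus hut
    exacts [hus ▸ ht, hut ▸ hs, h u hus hut]

theorem mem_cutJoinTriples_union_diagonalTriples {i j k : ι} {s t : α} {w : α → ι} :
    (s, t, w) ∈ cutJoinTriples σ i j ∪ diagonalTriples σ k ↔
      w ∈ invariantWords ι (σ * swap s t) ∧ (w s = i ∧ w t = j ∨ w s = k ∧ s = t) := by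
  simp only [mem_union, cutJoinTriples, diagonalTriples, mem_filter_univ, and_or_left]
  refine or_congr_right (and_congr_left ?_)
  rintro ⟨-, rfl⟩
  simp

theorem X_mul_cutJoinSum_add {i j : ι} (hij : i ≠ j) :
    X i * (cutJoinSum σ R i j + euler j (permPsum ι R σ)) =
      X j * (cutJoinSum σ R i j + euler i (permPsum ι R σ)) := by
  have hdisj (k : ι) : Disjoint (cutJoinTriples σ i j) (diagonalTriples σ k) := by
    rw [disjoint_left]
    simp only [cutJoinTriples, diagonalTriples, mem_filter_univ]
    grind
  have hσ : Function.Injective σ := σ.injective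
  rw [cutJoinSum, ← sum_diagonalTriples, ← sum_diagonalTriples, ← sum_union (hdisj j),
    ← sum_union (hdisj i), mul_sum, mul_sum]
  -- Replacing the letter `j` at `σ s` by `i` moves the marked position from `s` to `σ s`.
  refine sum_bij' (fun x _ => (σ x.1, x.2.1, Function.update x.2.2 (σ x.1) i))
    (fun x _ => (σ⁻¹ x.1, x.2.1, Function.update x.2.2 x.1 j)) ?_ ?_ ?_ ?_ ?_ <;>
    rintro ⟨s, t, w⟩ h
  · simp only [mem_cutJoinTriples_union_diagonalTriples, mem_invariantWords_mul_swap,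
      Function.update_apply] at h ⊢
    grind
  · obtain ⟨s, rfl⟩ := σ.surjective s
    simp only [mem_cutJoinTriples_union_diagonalTriples, mem_invariantWords_mul_swap,
      Function.update_apply, Perm.inv_def, symm_apply_apply] at h ⊢
    grind
  · rw [mem_cutJoinTriples_union_diagonalTriples, mem_invariantWords_mul_swap] at h
    have hj : w (σ s) = j := by grind
    simp [← hj]
  · rw [mem_cutJoinTriples_union_diagonalTriples] at h
    have hi : w s = i := by grind
    simp [← hi]
  · rw [mem_cutJoinTriples_union_diagonalTriples, mem_invariantWords_mul_swap] at h
    have hj : w (σ s) = j := by grind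
    rw [X_mul_wordMonomial i w (σ s), hj]

end PowerSums

section Transpositions

/-- The transpositions of `α`. -/
abbrev Transposition (α : Type*) [DecidableEq α] : Type _ := {τ : Perm α // τ.IsSwap}

noncomputable instance (α : Type*) [Fintype α] [DecidableEq α] : Fintype (Transposition α) :=
  Fintype.ofFinite _

theorem swap_self_apply_of_isSwap {α : Type*} [DecidableEq α] {τ : Perm α} (hτ : τ.IsSwap)
    {s : α} (hs : τ s ≠ s) : swap s (τ s) = τ := by
  obtain ⟨x, y, -, rfl⟩ := hτ
  rcases (swap_apply_ne_self_iff.mp hs).2 with rfl | rfl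
  · rw [swap_apply_left]
  · rw [swap_apply_right, swap_comm]

theorem sum_sum_swap {α M : Type*} [Fintype α] [DecidableEq α] [AddCommMonoid M]
    (f : Perm α → M) :
    ∑ s, ∑ t, f (swap s t) = Fintype.card α • f 1 + 2 • ∑ τ : Transposition α, f τ := by
  have hrow (s : α) :
      ∑ t, f (swap s t) = f 1 + ∑ τ : Transposition α with s ∈ τ.1.support, f τ := by
    rw [← add_sum_erase univ _ (mem_univ s), swap_self]
    refine congrArg (f 1 + ·) (sum_bij'
      (fun t ht => ⟨swap s t, s, t, (ne_of_mem_erase ht).symm, rfl⟩) (fun τ _ => τ.1 s)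
      ?_ ?_ ?_ ?_ ?_)
    · intro t ht
      simpa using ne_of_mem_erase ht
    · intro τ hτ
      simpa using hτ
    · simp
    · exact fun τ hτ => Subtype.ext (swap_self_apply_of_isSwap τ.2 (by simpa using hτ))
    · simp
  simp only [hrow, sum_add_distrib, sum_const, card_univ, sum_filter]
  rw [sum_comm, smul_sum]
  refine congrArg _ (sum_congr rfl fun τ _ => ?_)
  rw [← sum_filter, filter_univ_mem, sum_const, Perm.card_support_eq_two.mpr τ.2]

variable {α R : Type*} [Fintype α] [DecidableEq α] [CommRing R] {N : ℕ}

theorem cutJoinSum_mul_vandermondePoly (σ : Perm α) {i j : Fin N} (hij : i ≠ j) :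
    cutJoinSum σ R i j * vandermondePoly N R =
      X j * euler i (permPsum (Fin N) R σ) * vandermondeQuotient R i j + 
        X i * euler j (permPsum (Fin N) R σ) * vandermondeQuotient R j i := by
  rw [← sub_mul_vandermondeQuotient hij, vandermondeQuotient_swap i j]
  linear_combination vandermondeQuotient R i j * X_mul_cutJoinSum_add (R := R) σ hij

theorem sum_X_mul_vandermondeQuotient (i : Fin N) :
    ∑ j, X j * vandermondeQuotient R i j =
      euler i (vandermondePoly N R) - (N - 1) * vandermondePoly N R := by
  have hoff (j : Fin N) : X j * vandermondeQuotient R i j =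
      X i * vandermondeQuotient R i j - if j = i then 0 else vandermondePoly N R := by
    split_ifs with h
    · rw [h, sub_zero]
    · rw [← sub_mul_vandermondeQuotient (Ne.symm h)]
      ring
  simp only [hoff, sum_sub_distrib, ← mul_sum, ← pderiv_vandermondePoly, euler_apply]
  rw [← add_sum_erase _ _ (mem_univ i), if_pos rfl, zero_add,
    sum_congr rfl fun j hj => if_neg (ne_of_mem_erase hj), sum_const,
    card_erase_of_mem (mem_univ i), card_univ, Fintype.card_fin, nsmul_eq_mul, Nat.cast_pred i.pos]

theorem sum_cutJoinSum_mul_vandermondePoly (σ : Perm α) :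
    (∑ i, ∑ j, cutJoinSum σ R i j) * vandermondePoly N R =
      ∑ i, euler i (euler i (permPsum (Fin N) R σ)) * vandermondePoly N R +
      2 * ∑ i, euler i (permPsum (Fin N) R σ) * ∑ j, X j * vandermondeQuotient R i j := by
  set P := permPsum (Fin N) R σ
  have hterm (i j : Fin N) : cutJoinSum σ R i j * vandermondePoly N R =
      (if i = j then euler i (euler i P) * vandermondePoly N R else 0) +
        (euler i P * (X j * vandermondeQuotient R i j) +
          euler j P * (X i * vandermondeQuotient R j i)) := by
    split_ifs with h
    · rw [← h, cutJoinSum_self, vandermondeQuotient_self]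
      ring
    · rw [cutJoinSum_mul_vandermondePoly σ h]
      ring
  simp only [sum_mul, hterm, sum_add_distrib, sum_ite_eq, mem_univ, if_true]
  rw [sum_comm (f := fun i j => euler j P * (X i * vandermondeQuotient R j i))]
  simp only [← mul_sum, two_mul]

/-- Multiplying by the Vandermonde polynomial turns the sum over all transpositions into a
diagonal operator on monomials. -/
theorem sum_permPsum_mul_transposition (σ : Perm α) :
    (2 * ∑ τ : Transposition α, permPsum (Fin N) R (σ * τ.1)) * vandermondePoly N R =
      ∑ i, euler i (euler i (permPsum (Fin N) R σ * vandermondePoly N R)) -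
        ((∑ k ∈ range N, (k : R) ^ 2) + (2 * N - 1) * Fintype.card α) •
          (permPsum (Fin N) R σ * vandermondePoly N R) := by
  have hswap := sum_sum_swap fun τ : Perm α => permPsum (Fin N) R (σ * τ)
  rw [sum_permPsum_mul_swap, mul_one, two_nsmul, ← two_mul, ← sub_eq_iff_eq_add'] at hswap
  rw [← hswap, sub_mul, sum_cutJoinSum_mul_vandermondePoly]
  simp only [euler_euler_mul, sum_add_distrib, sum_X_mul_vandermondeQuotient, mul_sub,
    sum_sub_distrib, ← mul_sum, ← sum_mul, sum_euler_permPsum, sum_euler_euler_vandermondePoly]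
  simp only [smul_eq_C_mul, nsmul_eq_mul, map_add, map_sub, map_mul, map_one, map_natCast,
    map_ofNat]
  ring

end Transpositions

section ExponentBounds

theorem sum_range_card_le_sum (s : Finset ℕ) : ∑ i ∈ range #s, i ≤ ∑ x ∈ s, x := by
  have h := sum_range_le_sum (s := s.image ((↑) : ℕ → ℤ)) (c := 0) (by simp)
  rw [card_image_of_injective _ Nat.cast_injective,
    sum_image fun _ _ _ _ h => Nat.cast_injective h] at h
  simp only [zero_add] at h
  zify
  exact h

variable {N : ℕ} {m : Fin N → ℕ}

theorem sum_range_le_sum_of_injective (hm : Function.Injective m) :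
    ∑ i ∈ range N, i ≤ ∑ i, m i := by
  have h := sum_range_card_le_sum (univ.image m)
  rwa [card_image_of_injective _ hm, sum_image fun _ _ _ _ h => hm h, card_fin] at h

theorem sum_range_add_le_of_missing (hm : Function.Injective m) {j : ℕ} (hj : ∀ i, m i ≠ j) :
    (∑ i ∈ range N, i) + N ≤ (∑ i, m i) + j := by
  have hj' : j ∉ univ.image m := by simp [hj]
  have h := sum_range_card_le_sum (insert j (univ.image m))
  rw [card_insert_of_notMem hj', sum_insert hj', card_image_of_injective _ hm,
    sum_image fun _ _ _ _ h => hm h, card_fin, sum_range_succ] at h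
  omega

end ExponentBounds

section Lowering

variable {ι R : Type*} [CommRing R]

theorem divMonomial_X_pow_mul {i j : ι} (hij : i ≠ j) (k : ℕ)
    (f : MvPolynomial ι R) :
    (X i ^ k * f).divMonomial (Finsupp.single j 1) =
      X i ^ k * f.divMonomial (Finsupp.single j 1) := by
  ext m
  have hle : Finsupp.single i k ≤ Finsupp.single j 1 + m ↔ Finsupp.single i k ≤ m := by
    simp [Finsupp.single_le_iff, hij.symm]
  rw [coeff_divMonomial, X_pow_eq_monomial, coeff_monomial_mul', coeff_monomial_mul']
  simp only [hle, one_mul, coeff_divMonomial]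
  split_ifs with h
  · rw [add_tsub_assoc_of_le h]
  · rfl

theorem divMonomial_X_pow_succ_mul (i : ι) (k : ℕ) (f : MvPolynomial ι R) :
    (X i ^ (k + 1) * f).divMonomial (Finsupp.single i 1) =
      X i ^ (k + 1) * f.divMonomial (Finsupp.single i 1) +
        X i ^ k * f.modMonomial (Finsupp.single i 1) := by
  have hX : (X i ^ (k + 1) * f).divMonomial (Finsupp.single i 1) = X i ^ k * f := by
    rw [pow_succ', mul_assoc, X_mul_divMonomial]
  conv_lhs => rw [hX, ← divMonomial_add_modMonomial f (Finsupp.single i 1)]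
  change _ * (X i * _ + _) = _
  ring

theorem rename_divMonomial_single {κ : Type*} (e : ι ≃ κ) (i : ι) (f : MvPolynomial ι R) :
    rename e (f.divMonomial (Finsupp.single i 1)) =
      (rename e f).divMonomial (Finsupp.single (e i) 1) := by
  ext m
  obtain ⟨m, rfl⟩ := (Finsupp.mapDomain_surjective e.surjective) m
  rw [coeff_rename_mapDomain _ e.injective, coeff_divMonomial, coeff_divMonomial,
    ← Finsupp.mapDomain_single, ← Finsupp.mapDomain_add, coeff_rename_mapDomain _ e.injective]

variable [Fintype ι]

/-- The lowering operator `∑ i, xᵢ⁻¹` on polynomials, terms with a negative exponent being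
discarded. On the symmetric functions times the Vandermonde determinant it is dual, as long as
the degree does not exceed the number of variables, to multiplication by the power sum `p₁`. -/
noncomputable def lower : MvPolynomial ι R →ₗ[R] MvPolynomial ι R where
  toFun f := ∑ i, f.divMonomial (Finsupp.single i 1)
  map_add' f g := by simp only [add_divMonomial, sum_add_distrib]
  map_smul' r f := by
    ext m
    simp [coeff_sum, mul_sum]

theorem lower_apply (f : MvPolynomial ι R) :
    lower f = ∑ i, f.divMonomial (Finsupp.single i 1) := rfl

theorem coeff_lower (m : ι →₀ ℕ) (f : MvPolynomial ι R) :
    coeff m (lower f) = ∑ i, coeff (Finsupp.single i 1 + m) f := by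
  simp [lower_apply, coeff_sum]

theorem rename_lower (e : Perm ι) (f : MvPolynomial ι R) :
    rename e (lower f) = lower (rename e f) := by
  simp only [lower_apply, map_sum, rename_divMonomial_single]
  exact Equiv.sum_comp e fun i => (rename e f).divMonomial (Finsupp.single i 1)

theorem isHomogeneous_lower {n : ℕ} {f : MvPolynomial ι R} (hf : f.IsHomogeneous (n + 1)) :
    (lower f).IsHomogeneous n := by
  intro m hm
  rw [coeff_lower] at hm
  obtain ⟨i, -, hi⟩ := exists_ne_zero_of_sum_ne_zero hm
  have h := hf hi
  rw [map_add, Finsupp.weight_single, Pi.one_apply, one_smul, add_comm] at h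
  exact Nat.add_right_cancel h

/-- The defect of commutation of `lower` with multiplication by the power sum `p_{k+1}`. -/
noncomputable def lowerDefect (k : ℕ) (f : MvPolynomial ι R) : MvPolynomial ι R :=
  ∑ i, X i ^ k * f.modMonomial (Finsupp.single i 1)

theorem lower_psum_mul (k : ℕ) (f : MvPolynomial ι R) :
    lower (psum ι R (k + 1) * f) = psum ι R (k + 1) * lower f + lowerDefect k f := by
  classical
  simp only [psum, sum_mul, map_sum, lower_apply, lowerDefect, mul_sum]
  rw [sum_comm, ← sum_add_distrib]
  refine sum_congr rfl fun i _ => ?_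
  rw [← add_sum_erase _ _ (mem_univ i),
    ← add_sum_erase _ (fun j => X j ^ (k + 1) * f.divMonomial (Finsupp.single i 1)) (mem_univ i),
    divMonomial_X_pow_succ_mul, add_right_comm]
  congr 2
  exact sum_congr rfl fun j hj => divMonomial_X_pow_mul (ne_of_mem_erase hj) _ _

theorem coeff_lowerDefect (k : ℕ) (f : MvPolynomial ι R) (m : ι →₀ ℕ) :
    coeff m (lowerDefect k f) =
      ∑ i, if m i = k then coeff (m - Finsupp.single i k) f else 0 := by
  rw [lowerDefect, coeff_sum]
  refine sum_congr rfl fun i _ => ?_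
  simp only [X_pow_eq_monomial, coeff_monomial_mul', one_mul, Finsupp.single_le_iff]
  rcases lt_trichotomy (m i) k with h | h | h
  · rw [if_neg h.not_ge, if_neg h.ne]
  · rw [if_pos h.ge, if_pos h, coeff_modMonomial_of_not_le]
    simp [Finsupp.single_le_iff, h]
  · rw [if_pos h.le, if_neg h.ne', coeff_modMonomial_of_le]
    simp only [Finsupp.single_le_iff, Finsupp.tsub_apply, Finsupp.single_eq_same]
    omega

end Lowering

section Alternants

variable {N : ℕ} {R : Type*} [CommRing R]

/-- Polynomials changing sign under every transposition of two variables. -/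
def IsAntisymmetric (f : MvPolynomial (Fin N) R) : Prop :=
  ∀ i j, i ≠ j → rename (swap i j) f = -f

theorem IsAntisymmetric.injective [IsAddTorsionFree R] {f : MvPolynomial (Fin N) R}
    (hf : IsAntisymmetric f) {m : Fin N →₀ ℕ} (hm : coeff m f ≠ 0) : Function.Injective m := by
  intro i j hij
  by_contra hne
  have hswap : m.mapDomain (swap i j) = m := by
    ext x
    rw [← Finsupp.equivMapDomain_eq_mapDomain, Finsupp.equivMapDomain_apply, symm_swap,
      swap_apply_def]
    split_ifs <;> simp_all
  have h := coeff_rename_mapDomain (swap i j) (Equiv.injective _) f m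
  rw [hswap, hf i j hne, coeff_neg] at h
  exact hm (self_eq_neg.1 h.symm)

theorem IsAntisymmetric.lower {f : MvPolynomial (Fin N) R} (hf : IsAntisymmetric f) :
    IsAntisymmetric (lower f) := fun i j hij => by
  rw [rename_lower, hf i j hij, map_neg]

theorem IsAntisymmetric.psum_mul {f : MvPolynomial (Fin N) R} (hf : IsAntisymmetric f) (k : ℕ) :
    IsAntisymmetric (psum (Fin N) R k * f) := fun i j hij => by
  rw [map_mul, rename_psum, hf i j hij, mul_neg]

theorem IsAntisymmetric.lowerDefect {f : MvPolynomial (Fin N) R} (hf : IsAntisymmetric f)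
    (k : ℕ) : IsAntisymmetric (lowerDefect k f) := fun i j hij => by
  rw [eq_sub_of_add_eq' (lower_psum_mul k f).symm, map_sub, (hf.psum_mul _).lower i j hij,
    hf.lower.psum_mul _ i j hij, neg_sub_neg, neg_sub]

/-- Antisymmetric polynomials that are homogeneous of degree `e` above the Vandermonde
determinant, that is, the products of the latter with symmetric polynomials of degree `e`. -/
structure IsAlternant (e : ℕ) (f : MvPolynomial (Fin N) R) : Prop where
  antisymmetric : IsAntisymmetric f
  isHomogeneous : f.IsHomogeneous (e + ∑ i ∈ range N, i)

namespace IsAlternant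

variable {e k : ℕ} {f : MvPolynomial (Fin N) R}

theorem sum_eq (hf : IsAlternant e f) {m : Fin N →₀ ℕ} (hm : coeff m f ≠ 0) :
    ∑ i, m i = e + ∑ i ∈ range N, i := by
  rw [← Finsupp.degree_eq_sum]
  by_contra h
  exact hm (hf.isHomogeneous.coeff_eq_zero h)

theorem lower (hf : IsAlternant (e + 1) f) : IsAlternant e (lower f) :=
  ⟨hf.antisymmetric.lower, isHomogeneous_lower (by rw [add_right_comm]; exact hf.isHomogeneous)⟩

variable [IsAddTorsionFree R]

theorem exists_eq (hf : IsAlternant e f) {m : Fin N →₀ ℕ} (hm : coeff m f ≠ 0) {j : ℕ}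
    (h : e + j < N) : ∃ i, m i = j := by
  by_contra! hc
  have h1 := sum_range_add_le_of_missing (hf.antisymmetric.injective hm) hc
  have h2 := hf.sum_eq hm
  omega

theorem lower_eq_zero (hf : IsAlternant 0 f) : HurwitzToda.lower f = 0 := by
  ext m
  rw [coeff_zero]
  by_contra hm
  have hle := sum_range_le_sum_of_injective (hf.antisymmetric.lower.injective hm)
  rw [coeff_lower] at hm
  obtain ⟨i, -, hi⟩ := exists_ne_zero_of_sum_ne_zero hm
  have heq := hf.sum_eq hi
  simp only [Finsupp.add_apply, sum_add_distrib, Finsupp.single_apply, sum_ite_eq, mem_univ,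
    if_true] at heq
  omega

theorem lower_psum_one_mul (hf : IsAlternant e f) (h : e < N) :
    HurwitzToda.lower (psum (Fin N) R 1 * f) = psum (Fin N) R 1 * HurwitzToda.lower f + f := by
  rw [lower_psum_mul, add_right_inj]
  ext m
  simp only [coeff_lowerDefect, Finsupp.single_zero, tsub_zero]
  by_cases hm : coeff m f = 0
  · simp [hm]
  · obtain ⟨i, hi⟩ := hf.exists_eq hm (j := 0) h
    have hinj := hf.antisymmetric.injective hm
    rw [sum_eq_single i (fun j _ hj => if_neg fun h0 => hj (hinj (h0.trans hi.symm))) (by simp),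
      if_pos hi]

/-- A monomial of the defect has exponent `k` at some `i`, replaced by `0` in `f`; the exponent
`k`, present in that monomial of `f` for degree reasons, then occurs twice in the defect. -/
theorem lowerDefect_eq_zero (hf : IsAlternant e f) (hk : 0 < k) (h : e + k < N) :
    lowerDefect k f = 0 := by
  ext m
  rw [coeff_zero]
  by_contra hm
  have hinj := (hf.antisymmetric.lowerDefect k).injective hm
  rw [coeff_lowerDefect] at hm
  obtain ⟨i, -, hi⟩ := exists_ne_zero_of_sum_ne_zero hm
  obtain ⟨hik, hi⟩ := ite_ne_right_iff.1 hi
  obtain ⟨j, hj⟩ := hf.exists_eq hi h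
  have hji : j ≠ i := by
    rintro rfl
    simp [hik] at hj
    omega
  refine hji (hinj ?_)
  rw [hik, ← hj, Finsupp.tsub_apply, Finsupp.single_eq_of_ne hji, tsub_zero]

theorem lower_pow_psum_mul (hk : 0 < k) (h : e + k < N) (hf : IsAlternant e f) :
    (HurwitzToda.lower ^ (e + 1)) (psum (Fin N) R (k + 1) * f) = 0 := by
  induction e generalizing f with
  | zero =>
    rw [zero_add, pow_one, lower_psum_mul, hf.lower_eq_zero, hf.lowerDefect_eq_zero hk h, mul_zero,
      add_zero]
  | succ e ih =>
    rw [pow_succ, Module.End.mul_apply, lower_psum_mul, hf.lowerDefect_eq_zero hk h, add_zero]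
    exact ih (by omega) hf.lower

end IsAlternant

end Alternants

section CycleType

variable {α ι R : Type*} [Fintype α] [DecidableEq α] [Fintype ι] [DecidableEq ι] [CommRing R]

theorem rename_permPsum (σ : Perm α) (κ : Perm ι) :
    rename κ (permPsum ι R σ) = permPsum ι R σ := by
  simp only [permPsum, wordMonomial, map_sum, map_prod, rename_X]
  refine sum_equiv (Equiv.arrowCongr (Equiv.refl α) κ) (fun w => ?_) fun w _ => rfl
  simp

theorem isHomogeneous_permPsum (σ : Perm α) :
    (permPsum ι R σ).IsHomogeneous (Fintype.card α) := by
  refine IsHomogeneous.sum _ _ _ fun w _ => ?_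
  simpa [wordMonomial] using
    IsHomogeneous.prod univ (fun s => X (R := R) (w s)) (fun _ => 1) fun s _ => isHomogeneous_X _ _

theorem permPsum_one : permPsum ι R (1 : Perm α) = psum ι R 1 ^ Fintype.card α := by
  simp only [permPsum, wordMonomial, psum_one, ← card_univ (α := α), ← prod_const, prod_univ_sum]
  simp [invariantWords]

theorem eq_of_mem_invariantWords {σ : Perm α} {w : α → ι} (hw : w ∈ invariantWords ι σ) {x y : α}
    (h : σ.SameCycle x y) : w x = w y := by
  rw [mem_invariantWords] at hw
  have hpow : ∀ n : ℕ, w ((σ ^ n) x) = w x := fun n => by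
    induction n with
    | zero => rfl
    | succ n ih => rw [pow_succ', Perm.mul_apply, hw, ih]
  obtain ⟨n, rfl⟩ := h.exists_nat_pow_eq
  exact (hpow n).symm

/-- The cycle of `σ` through `x` contributes one factor to the power sum of `σ`. -/
theorem permPsum_eq_psum_mul (σ : Perm α) (x : α) :
    permPsum ι R σ = psum ι R #{y | σ.SameCycle x y} *
      permPsum ι R (σ.subtypePerm (p := fun y => ¬ σ.SameCycle x y)
        fun _ => not_congr Perm.sameCycle_apply_right) := by
  rw [permPsum, permPsum, psum, sum_mul_sum, ← sum_product']
  refine sum_bij' (fun w _ => (w x, fun y => w y.1))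
    (fun p _ y => if h : σ.SameCycle x y then p.1 else p.2 ⟨y, h⟩) ?_ ?_ ?_ ?_ ?_
  · intro w hw
    simp only [mem_invariantWords] at hw
    simp [hw]
  · rintro ⟨i, v⟩ hv
    simp only [mem_product, mem_univ, true_and, mem_invariantWords] at hv
    refine mem_invariantWords.2 fun y => ?_
    by_cases h : σ.SameCycle x y
    · simp [h]
    · simpa [h] using hv ⟨y, h⟩
  · intro w hw
    funext y
    by_cases h : σ.SameCycle x y
    · simp [h, eq_of_mem_invariantWords hw h]
    · simp [h]
  · rintro ⟨i, v⟩ -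
    refine Prod.ext (dif_pos (Perm.SameCycle.refl _ _)) ?_
    funext y
    simp [y.2]
  · intro w hw
    rw [wordMonomial, ← Fintype.prod_subtype_mul_prod_subtype (fun y => σ.SameCycle x y),
      ← Fintype.card_subtype, Fintype.card, ← prod_const]
    exact congrArg (· * _)
      (prod_congr rfl fun y _ => by rw [eq_of_mem_invariantWords hw y.2])

end CycleType

section Extraction

variable {N : ℕ} {R : Type*} [CommRing R]

theorem isAlternant_vandermondePoly : IsAlternant 0 (vandermondePoly N R) where
  antisymmetric i j hij := by
    have h := Matrix.det_permute (swap i j)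
      (Matrix.vandermonde (X : Fin N → MvPolynomial (Fin N) R))
    rw [Perm.sign_swap hij, Units.val_neg, Units.val_one, Int.cast_neg, Int.cast_one,
      neg_one_mul] at h
    rw [vandermondePoly, AlgHom.map_det, ← h]
    congr 1
    ext a b
    simp [Matrix.vandermonde_apply]
  isHomogeneous := by
    rw [zero_add, vandermondePoly_eq_sum]
    refine IsHomogeneous.sum _ _ _ fun κ _ => ?_
    rw [smul_monomial]
    refine isHomogeneous_monomial _ ?_
    rw [Finsupp.degree_eq_sum, sum_staircase]

variable {α : Type*} [Fintype α] [DecidableEq α]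

theorem isAlternant_permPsum_mul (σ : Perm α) :
    IsAlternant (Fintype.card α) (permPsum (Fin N) R σ * vandermondePoly N R) where
  antisymmetric i j hij := by
    rw [map_mul, rename_permPsum, isAlternant_vandermondePoly.antisymmetric i j hij, mul_neg]
  isHomogeneous := by
    simpa using (isHomogeneous_permPsum σ).mul isAlternant_vandermondePoly.isHomogeneous

variable [IsAddTorsionFree R]

theorem lower_pow_psum_one_pow_mul {n : ℕ} (hn : n ≤ N) :
    (lower ^ n) (psum (Fin N) R 1 ^ n * vandermondePoly N R) = (n ! : R) • vandermondePoly N R := by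
  have halt (n : ℕ) : IsAlternant n (psum (Fin N) R 1 ^ n * vandermondePoly N R) := by
    simpa [permPsum_one] using isAlternant_permPsum_mul (N := N) (R := R) (1 : Perm (Fin n))
  have hlower {n : ℕ} (hn : n < N) :
      lower (psum (Fin N) R 1 ^ (n + 1) * vandermondePoly N R) =
        ((n + 1 : ℕ) : R) • (psum (Fin N) R 1 ^ n * vandermondePoly N R) := by
    induction n with
    | zero =>
      rw [zero_add, pow_one, isAlternant_vandermondePoly.lower_psum_one_mul hn,
        isAlternant_vandermondePoly.lower_eq_zero]
      simp
    | succ n ih =>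
      rw [pow_succ', mul_assoc, (halt _).lower_psum_one_mul hn, ih (by omega), mul_smul_comm,
        ← mul_assoc, ← pow_succ', Nat.cast_succ (n + 1), add_smul, one_smul]
  induction n with
  | zero => simp
  | succ n ih =>
    rw [pow_succ, Module.End.mul_apply, hlower hn, map_smul, ih (by omega), smul_smul,
      Nat.factorial_succ, Nat.cast_mul]

/-- Besides `1`, every permutation has a cycle of length at least two, whose power sum is killed
by the lowering operators. -/
theorem lower_pow_permPsum_mul (hN : Fintype.card α ≤ N) (σ : Perm α) :
    (lower ^ Fintype.card α) (permPsum (Fin N) R σ * vandermondePoly N R) =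
      if σ = 1 then ((Fintype.card α)! : R) • vandermondePoly N R else 0 := by
  split_ifs with hσ
  · rw [hσ, permPsum_one, lower_pow_psum_one_pow_mul hN]
  · obtain ⟨x, hx⟩ : ∃ x, σ x ≠ x := by
      by_contra! h
      exact hσ (Equiv.ext h)
    have hcycle : 1 < #{y | σ.SameCycle x y} :=
      one_lt_card.2 ⟨x, by simp [Perm.SameCycle.refl], σ x, by simp [Perm.SameCycle.refl], hx.symm⟩
    have hcard := Fintype.card_subtype_compl fun y => σ.SameCycle x y
    have hle := Fintype.card_subtype_le fun y => σ.SameCycle x y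
    rw [Fintype.card_subtype fun y => σ.SameCycle x y] at hcard hle
    obtain ⟨k, hk⟩ := Nat.exists_eq_add_of_lt hcycle
    rw [permPsum_eq_psum_mul σ x, mul_assoc]
    have halt := isAlternant_permPsum_mul (N := N) (R := R)
      (σ.subtypePerm (p := fun y => ¬ σ.SameCycle x y) fun _ =>
        not_congr Perm.sameCycle_apply_right)
    have hpow : lower (ι := Fin N) (R := R) ^ Fintype.card α =
        lower ^ (k + 1) * lower ^ (Fintype.card {y // ¬ σ.SameCycle x y} + 1) := by
      rw [← pow_add]
      congr 1
      omega
    rw [hpow, Module.End.mul_apply, hk, halt.lower_pow_psum_mul (by omega) (by omega), map_zero]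

end Extraction

section Pairing

variable {ι R : Type*} [CommRing R]

/-- The bilinear pairing of polynomials for which the monomials are orthonormal. -/
noncomputable def pairing (f : MvPolynomial ι R) : MvPolynomial ι R →ₗ[R] R :=
  (basisMonomials ι R).constr R fun m => coeff m f

theorem pairing_monomial (f : MvPolynomial ι R) (m : ι →₀ ℕ) (r : R) :
    pairing f (monomial m r) = r * coeff m f := by
  have h : monomial m r = r • basisMonomials ι R m := by
    rw [coe_basisMonomials, smul_monomial, smul_eq_mul, mul_one]
  rw [h, map_smul, pairing, Module.Basis.constr_basis, smul_eq_mul]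

theorem pairing_eq_sum {f g : MvPolynomial ι R} {s : Finset (ι →₀ ℕ)} (h : g.support ⊆ s) :
    pairing f g = ∑ l ∈ s, coeff l g * coeff l f := by
  conv_lhs => rw [g.as_sum, map_sum]
  simp only [pairing_monomial]
  exact sum_subset h fun l _ hl => by rw [notMem_support_iff.1 hl, zero_mul]

theorem pairing_X_mul (f g : MvPolynomial ι R) (i : ι) :
    pairing f (X i * g) = pairing (f.divMonomial (Finsupp.single i 1)) g := by
  induction g using MvPolynomial.induction_on' with
  | monomial m r =>
    rw [X, monomial_mul, one_mul, pairing_monomial, pairing_monomial, coeff_divMonomial]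
  | add p q hp hq => rw [mul_add, map_add, map_add, hp, hq]

theorem pairing_sum_left {κ : Type*} (s : Finset κ) (f : κ → MvPolynomial ι R)
    (g : MvPolynomial ι R) : pairing (∑ k ∈ s, f k) g = ∑ k ∈ s, pairing (f k) g := by
  simp only [pairing_eq_sum subset_rfl, coeff_sum, mul_sum]
  exact sum_comm

variable [Fintype ι]

theorem pairing_psum_one_pow_mul (f g : MvPolynomial ι R) (n : ℕ) :
    pairing f (psum ι R 1 ^ n * g) = pairing ((lower ^ n) f) g := by
  induction n generalizing f with
  | zero => simp
  | succ n ih =>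
    rw [pow_succ', mul_assoc, psum_one, sum_mul, map_sum, ← psum_one, pow_succ,
      Module.End.mul_apply, ← ih, lower_apply, pairing_sum_left]
    exact sum_congr rfl fun i _ => pairing_X_mul _ _ _

theorem coeff_psum_one_mul [DecidableEq ι] (f : MvPolynomial ι R) (l : ι →₀ ℕ) :
    coeff l (psum ι R 1 * f) =
      ∑ i, if i ∈ l.support then coeff (l - Finsupp.single i 1) f else 0 := by
  simp only [psum_one, sum_mul, coeff_sum, coeff_X_mul']

theorem descFactorial_pred_div_factorial {l : ℕ} (hl : l ≠ 0) (m : ℕ) :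
    ((l - 1).descFactorial m : ℚ) / (l - 1)! = ((l : ℚ) - m) * (l.descFactorial m / l !) := by
  obtain ⟨n, rfl⟩ := Nat.exists_eq_succ_of_ne_zero hl
  have h : ((n + 1 : ℚ) - m) * (n + 1).descFactorial m = (n + 1) * n.descFactorial m := by
    rcases le_or_gt m (n + 1) with hm | hm
    · exact_mod_cast Nat.succ_descFactorial n m
    · rw [Nat.descFactorial_of_lt hm, Nat.descFactorial_of_lt (by omega)]
      simp
  rw [Nat.succ_sub_one, Nat.factorial_succ]
  push_cast
  field_simp
  linear_combination -h

theorem sum_tsub_single_add_one {l : ι →₀ ℕ} {i : ι} (hi : l i ≠ 0) :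
    ∑ j, (l - Finsupp.single i 1 : ι →₀ ℕ) j + 1 = ∑ j, l j := by
  have hsub : l - Finsupp.single i 1 + Finsupp.single i 1 = l :=
    tsub_add_cancel_of_le (Finsupp.single_le_iff.2 (Nat.one_le_iff_ne_zero.2 hi))
  conv_rhs => rw [← hsub]
  simp_rw [Finsupp.add_apply, sum_add_distrib]
  rw [← Finsupp.degree_eq_sum (Finsupp.single i 1), Finsupp.degree_single]

theorem coeff_psum_one_pow_mul_monomial (d : ℕ) {l m : ι →₀ ℕ}
    (h : ∑ i, l i = ∑ i, m i + d) :
    coeff l (psum ι ℚ 1 ^ d * monomial m 1) =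
      d ! * ∏ i, ((l i).descFactorial (m i) : ℚ) / (l i)! := by
  classical
  induction d generalizing l with
  | zero =>
    rw [pow_zero, one_mul, coeff_monomial, Nat.factorial_zero, Nat.cast_one, one_mul]
    split_ifs with hml
    · subst hml
      exact (prod_eq_one fun i _ => by
        rw [Nat.descFactorial_self, div_self (by positivity)]).symm
    · obtain ⟨i, hi⟩ : ∃ i, l i < m i := by
        by_contra! hle
        refine hml (Finsupp.ext fun i => ?_)
        exact (sum_eq_sum_iff_of_le fun i _ => hle i).1 h.symm i (mem_univ i)
      exact (prod_eq_zero (mem_univ i) (by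
        rw [Nat.descFactorial_of_lt hi, Nat.cast_zero, zero_div])).symm
  | succ d ih =>
    have hterm (i : ι) : (if i ∈ l.support then
        coeff (l - Finsupp.single i 1) (psum ι ℚ 1 ^ d * monomial m 1) else 0) =
        d ! * (((l i : ℚ) - m i) * ∏ i, ((l i).descFactorial (m i) : ℚ) / (l i)!) := by
      rw [← mul_prod_erase univ _ (mem_univ i), ← mul_assoc ((l i : ℚ) - m i)]
      split_ifs with hi
      · have hli : l i ≠ 0 := Finsupp.mem_support_iff.1 hi
        have hsum := sum_tsub_single_add_one hli
        rw [ih (by omega), ← mul_prod_erase univ _ (mem_univ i), Finsupp.tsub_apply,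
          Finsupp.single_eq_same, descFactorial_pred_div_factorial hli]
        congr 2
        refine prod_congr rfl fun j hj => ?_
        rw [Finsupp.tsub_apply, Finsupp.single_eq_of_ne (ne_of_mem_erase hj), tsub_zero]
      · rw [Finsupp.notMem_support_iff.1 hi]
        rcases (m i).eq_zero_or_pos with hm | hm
        · simp [hm]
        · simp [Nat.descFactorial_of_lt hm]
    rw [pow_succ', mul_assoc, coeff_psum_one_mul, sum_congr rfl fun i _ => hterm i, ← mul_sum,
      ← sum_mul, sum_sub_distrib, ← Nat.cast_sum, h, Nat.factorial_succ]
    push_cast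
    ring

end Pairing

section Factorizations

theorem inv_eq_self_of_isSwap {α : Type*} [DecidableEq α] {τ : Perm α} (hτ : τ.IsSwap) :
    τ⁻¹ = τ := by
  obtain ⟨x, y, -, rfl⟩ := hτ
  exact swap_inv x y

variable {α : Type*} [Fintype α] [DecidableEq α]

/-- The number of factorizations of a permutation into `r` transpositions. -/
noncomputable def factorizationCount (r : ℕ) (σ : Perm α) : ℕ :=
  Fintype.card {w : Fin r → Transposition α // (List.ofFn fun i => (w i).1).prod = σ}

theorem factorizationCount_zero (σ : Perm α) :
    factorizationCount 0 σ = if σ = 1 then 1 else 0 := by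
  simp [factorizationCount, Fintype.card_subtype, eq_comm (a := (1 : Perm α)), filter_const]
  split_ifs <;> rfl

theorem factorizationCount_succ (r : ℕ) (σ : Perm α) :
    factorizationCount (r + 1) σ = ∑ τ : Transposition α, factorizationCount r (σ * τ.1) := by
  have hiff (p : Transposition α × (Fin r → Transposition α)) :
      (List.ofFn fun i => (p.2 i).1).prod = σ * p.1.1 ↔
      (List.ofFn fun i => ((Fin.snocEquiv fun _ => Transposition α) p i).1).prod = σ := by
    rw [List.ofFn_succ', List.concat_eq_append, List.prod_append]
    simp [Fin.snocEquiv, ← eq_mul_inv_iff_mul_eq, inv_eq_self_of_isSwap p.1.2]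
  let P (τ : Transposition α) (w : Fin r → Transposition α) : Prop :=
    (List.ofFn fun i => (w i).1).prod = σ * τ.1
  rw [factorizationCount, ← Fintype.card_congr (Equiv.subtypeEquiv _ hiff)]
  exact (Fintype.card_congr (Equiv.subtypeProdEquivSigmaSubtype P)).trans Fintype.card_sigma

/-- The image of the class function `factorizationCount r` in the symmetric polynomials under the
Frobenius characteristic map. -/
noncomputable def factorizationPoly (α : Type*) [Fintype α] [DecidableEq α] (N r : ℕ) :
    MvPolynomial (Fin N) ℚ :=
  ∑ σ : Perm α, (factorizationCount r σ : ℚ) • permPsum (Fin N) ℚ σ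

/-- For an exponent `l = λ + δ`, this is the sum of the contents of the cells of `λ`, a partition
of `d` with at most `N` parts. -/
noncomputable def contentSum {N : ℕ} (d : ℕ) (l : Fin N →₀ ℕ) : ℚ :=
  ((∑ i, (l i : ℚ) ^ 2) - ((∑ k ∈ range N, (k : ℚ) ^ 2) + (2 * N - 1) * d)) / 2

theorem factorizationPoly_zero (N : ℕ) :
    factorizationPoly α N 0 = permPsum (Fin N) ℚ (1 : Perm α) := by
  simp [factorizationPoly, factorizationCount_zero]

theorem two_mul_factorizationPoly_succ (N r : ℕ) :
    2 * factorizationPoly α N (r + 1) =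
      ∑ σ : Perm α, (factorizationCount r σ : ℚ) •
        (2 * ∑ τ : Transposition α, permPsum (Fin N) ℚ (σ * τ.1)) := by
  have h (τ : Transposition α) : ∑ σ : Perm α, (factorizationCount r (σ * τ.1) : ℚ) •
      permPsum (Fin N) ℚ σ = ∑ σ : Perm α, (factorizationCount r σ : ℚ) •
        permPsum (Fin N) ℚ (σ * τ.1) := by
    rw [← Equiv.sum_comp (Equiv.mulRight τ.1)]
    simp only [Equiv.coe_mulRight, mul_assoc,
      mul_eq_one_iff_eq_inv.2 (inv_eq_self_of_isSwap τ.2).symm,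
      mul_one]
  simp only [factorizationPoly, factorizationCount_succ, Nat.cast_sum, sum_smul]
  rw [sum_comm, sum_congr rfl fun τ _ => h τ, sum_comm]
  simp only [← smul_sum, mul_sum, mul_smul_comm]

theorem coeff_factorizationPoly_mul (N r : ℕ) (l : Fin N →₀ ℕ) :
    coeff l (factorizationPoly α N r * vandermondePoly N ℚ) =
      contentSum (Fintype.card α) l ^ r *
        coeff l (psum (Fin N) ℚ 1 ^ Fintype.card α * vandermondePoly N ℚ) := by
  induction r with
  | zero => rw [factorizationPoly_zero, permPsum_one, pow_zero, one_mul]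
  | succ r ih =>
    have hσ (σ : Perm α) : coeff l
        ((2 * ∑ τ : Transposition α, permPsum (Fin N) ℚ (σ * τ.1)) * vandermondePoly N ℚ) =
          2 * contentSum (Fintype.card α) l *
            coeff l (permPsum (Fin N) ℚ σ * vandermondePoly N ℚ) := by
      rw [sum_permPsum_mul_transposition, coeff_sub, coeff_sum, coeff_smul]
      simp only [coeff_euler, ← mul_assoc, ← pow_two, ← sum_mul, smul_eq_mul]
      rw [contentSum]
      ring
    have htwo : 2 * coeff l (factorizationPoly α N (r + 1) * vandermondePoly N ℚ) =
        2 * contentSum (Fintype.card α) l *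
          coeff l (factorizationPoly α N r * vandermondePoly N ℚ) := by
      rw [← coeff_C_mul, map_ofNat, ← mul_assoc, two_mul_factorizationPoly_succ, sum_mul,
        coeff_sum, factorizationPoly, sum_mul, coeff_sum, mul_sum]
      refine sum_congr rfl fun σ _ => ?_
      rw [smul_mul_assoc, coeff_smul, hσ, smul_mul_assoc, coeff_smul, smul_eq_mul, smul_eq_mul]
      ring
    rw [ih] at htwo
    linear_combination htwo / 2

theorem lower_pow_factorizationPoly_mul {N : ℕ} (hN : Fintype.card α ≤ N) (r : ℕ) :
    (lower ^ Fintype.card α)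
        (factorizationPoly α N r * vandermondePoly N ℚ) =
      ((Fintype.card α)! * factorizationCount r (1 : Perm α) : ℚ) • vandermondePoly N ℚ := by
  simp only [factorizationPoly, sum_mul, smul_mul_assoc, map_sum, map_smul,
    lower_pow_permPsum_mul hN]
  rw [sum_eq_single 1 (fun σ _ hσ => by rw [if_neg hσ, smul_zero]) (by simp), if_pos rfl, smul_smul,
    mul_comm]

end Factorizations

section CountFormula

variable {N : ℕ}

theorem coeff_staircase_one_vandermondePoly :
    coeff (staircase 1) (vandermondePoly N ℚ) = 1 := by
  rw [vandermondePoly_eq_sum, coeff_sum, sum_eq_single 1]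
  · simp
  · intro κ _ hκ
    rw [coeff_smul, coeff_monomial, if_neg, smul_zero]
    refine fun h => hκ (Equiv.ext fun i => Fin.ext ?_)
    simpa using DFunLike.congr_fun h i
  · simp

theorem coeff_psum_one_pow_mul_vandermondePoly (d : ℕ) {l : Fin N →₀ ℕ}
    (hl : ∑ i, l i = ∑ i ∈ range N, i + d) :
    coeff l (psum (Fin N) ℚ 1 ^ d * vandermondePoly N ℚ) =
      d ! * ((Matrix.of fun i j : Fin N => ((l i).descFactorial j : ℚ)).det /
        ∏ i, ((l i)! : ℚ)) := by
  rw [vandermondePoly_eq_sum, ← Matrix.det_transpose, Matrix.det_apply', mul_sum, coeff_sum,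
    sum_div, mul_sum]
  refine sum_congr rfl fun κ _ => ?_
  rw [mul_smul_comm, coeff_smul, coeff_psum_one_pow_mul_monomial d (by rw [sum_staircase, hl]),
    prod_div_distrib]
  simp only [staircase_apply, Matrix.transpose_apply, Matrix.of_apply, smul_eq_mul]
  ring

/-- Frobenius' formula: the terms of the rearrangements `l` of `λ + δ` add up to the contribution of
the partition `λ` of `d`. -/
theorem factorizationCount_one_div_factorial {d : ℕ} (hd : d ≤ N) (r : ℕ) :
    (factorizationCount r (1 : Perm (Fin d)) : ℚ) / d ! =
      ∑ l ∈ finsuppAntidiag univ (∑ i ∈ range N, i + d), contentSum d l ^ r *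
        ((∏ i, ((l i).descFactorial i : ℚ)) *
          (Matrix.of fun i j : Fin N => ((l i).descFactorial j : ℚ)).det /
            ∏ i, ((l i)! : ℚ) ^ 2) := by
  set V := vandermondePoly N ℚ
  set F := factorizationPoly (Fin d) N r * V
  have hlower : coeff (staircase 1) ((lower ^ d) F) =
      d ! * factorizationCount r (1 : Perm (Fin d)) := by
    have h := lower_pow_factorizationPoly_mul (N := N) (α := Fin d) (by simpa using hd) r
    rw [Fintype.card_fin] at h
    rw [h, coeff_smul, coeff_staircase_one_vandermondePoly, smul_eq_mul, mul_one]
  have hhom : (psum (Fin N) ℚ 1 ^ d * monomial (staircase 1) 1).IsHomogeneous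
      (1 * d + (staircase (1 : Perm (Fin N))).degree) := by
    rw [psum_one]
    exact ((IsHomogeneous.sum _ _ _ fun i _ => isHomogeneous_X _ i).pow d).mul
      (isHomogeneous_monomial _ rfl)
  have hsupport : (psum (Fin N) ℚ 1 ^ d * monomial (staircase 1) 1).support ⊆
      finsuppAntidiag univ (∑ i ∈ range N, i + d) := fun l hl => by
    rw [mem_finsuppAntidiag, ← Finsupp.degree_eq_sum]
    refine ⟨?_, subset_univ _⟩
    rw [← sum_staircase 1, ← Finsupp.degree_eq_sum]
    by_contra h
    exact mem_support_iff.1 hl (hhom.coeff_eq_zero (by omega))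
  have hpairing := pairing_psum_one_pow_mul F (monomial (staircase 1) 1) d
  rw [pairing_monomial, one_mul, hlower, pairing_eq_sum hsupport] at hpairing
  have hd0 : (d ! : ℚ) ≠ 0 := by positivity
  rw [div_eq_iff hd0, ← mul_right_inj' hd0, ← hpairing, sum_mul, mul_sum]
  refine sum_congr rfl fun l hl => ?_
  have hl : ∑ i, l i = ∑ i ∈ range N, i + d := (mem_finsuppAntidiag.1 hl).1
  rw [coeff_psum_one_pow_mul_monomial d (by rw [sum_staircase, hl]), coeff_factorizationPoly_mul,
    Fintype.card_fin, coeff_psum_one_pow_mul_vandermondePoly d hl, prod_div_distrib, prod_pow]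
  simp only [staircase_apply, Perm.one_apply]
  ring

end CountFormula

end Polynomials

section Determinants

variable {n ι R A : Type*} [Fintype n] [DecidableEq n] [CommRing R] [CommRing A] [Algebra R A]

theorem derivation_det (D : Derivation R A A) (M : Matrix n n A) :
    D M.det = ∑ j, (M.updateRow j fun k => D (M j k)).det := by
  have hdet (M : Matrix n n A) :
      M.det = ∑ κ : Perm n, ((Perm.sign κ : ℤ) : A) * ∏ i, M i (κ i) := by
    rw [← Matrix.det_transpose, Matrix.det_apply']
    simp only [Matrix.transpose_apply]
  rw [hdet, map_sum]
  simp only [hdet]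
  rw [sum_comm]
  refine sum_congr rfl fun κ _ => ?_
  rw [D.leibniz, D.map_intCast, smul_zero, add_zero, derivation_prod, smul_eq_mul, mul_sum]
  refine sum_congr rfl fun j _ => ?_
  rw [← prod_erase_mul univ _ (mem_univ j), Matrix.updateRow_self]
  congr 2
  exact prod_congr rfl fun i hi => by rw [Matrix.updateRow_ne (ne_of_mem_erase hi)]

/-- The determinant of the upper left block bordered by one further row and column. -/
def borderedMinor (M : Matrix (n ⊕ ι) (n ⊕ ι) A) (i j : ι) : A :=
  (M.submatrix (Sum.map id fun _ : Unit => i) (Sum.map id fun _ : Unit => j)).det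

theorem borderedMinor_map {B : Type*} [CommRing B] (f : A →+* B)
    (M : Matrix (n ⊕ ι) (n ⊕ ι) A) (i j : ι) :
    borderedMinor (M.map f) i j = f (borderedMinor M i j) := by
  rw [borderedMinor, borderedMinor, RingHom.map_det]
  rfl

theorem borderedMinor_eq_det_mul (M : Matrix (n ⊕ ι) (n ⊕ ι) A) [Invertible M.toBlocks₁₁]
    (i j : ι) : borderedMinor M i j = M.toBlocks₁₁.det *
      (M.toBlocks₂₂ - M.toBlocks₂₁ * ⅟M.toBlocks₁₁ * M.toBlocks₁₂) i j := by
  have h : M.submatrix (Sum.map id fun _ : Unit => i) (Sum.map id fun _ : Unit => j) =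
      Matrix.fromBlocks M.toBlocks₁₁ (M.toBlocks₁₂.submatrix id fun _ : Unit => j)
        (M.toBlocks₂₁.submatrix (fun _ : Unit => i) id)
        (M.toBlocks₂₂.submatrix (fun _ : Unit => i) fun _ => j) := by
    ext (_ | _) (_ | _) <;> rfl
  rw [borderedMinor, h, Matrix.det_fromBlocks₁₁, Matrix.det_unique (n := Unit)]
  simp only [Matrix.sub_apply, Matrix.mul_apply, Matrix.submatrix_apply, id_eq]

theorem sylvester_identity_of_field {K : Type*} [Field K] [Fintype ι] [DecidableEq ι]
    (M : Matrix (n ⊕ ι) (n ⊕ ι) K) (h : M.toBlocks₁₁.det ≠ 0) :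
    (Matrix.of (borderedMinor M)).det * M.toBlocks₁₁.det =
      M.toBlocks₁₁.det ^ Fintype.card ι * M.det := by
  let _ := Matrix.invertibleOfIsUnitDet _ (isUnit_iff_ne_zero.2 h)
  have hminor : Matrix.of (borderedMinor M) = M.toBlocks₁₁.det •
      (M.toBlocks₂₂ - M.toBlocks₂₁ * ⅟M.toBlocks₁₁ * M.toBlocks₁₂) := by
    ext i j
    exact borderedMinor_eq_det_mul M i j
  have hdet := Matrix.det_fromBlocks₁₁ M.toBlocks₁₁ M.toBlocks₁₂ M.toBlocks₂₁ M.toBlocks₂₂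
  rw [Matrix.fromBlocks_toBlocks] at hdet
  rw [hminor, Matrix.det_smul, hdet]
  ring

theorem sylvester_identity [IsDomain A] [Fintype ι] [DecidableEq ι]
    (M : Matrix (n ⊕ ι) (n ⊕ ι) A) (h : M.toBlocks₁₁.det ≠ 0) :
    (Matrix.of (borderedMinor M)).det * M.toBlocks₁₁.det =
      M.toBlocks₁₁.det ^ Fintype.card ι * M.det := by
  let f := algebraMap A (FractionRing A)
  have hf : Function.Injective f := IsFractionRing.injective A (FractionRing A)
  have hblock : (M.map f).toBlocks₁₁.det = f M.toBlocks₁₁.det := by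
    rw [RingHom.map_det]
    rfl
  have hminor : (Matrix.of (borderedMinor (M.map f))).det =
      f (Matrix.of (borderedMinor M)).det := by
    rw [RingHom.map_det]
    congr 1
    ext i j
    exact borderedMinor_map f M i j
  apply hf
  rw [map_mul, map_mul, map_pow, ← hblock, ← hminor, RingHom.map_det]
  exact sylvester_identity_of_field _ (by rwa [hblock, map_ne_zero_iff f hf])

theorem desnanot_jacobi [IsDomain A] (M : Matrix (n ⊕ Fin 2) (n ⊕ Fin 2) A)
    (h : M.toBlocks₁₁.det ≠ 0) : M.det * M.toBlocks₁₁.det =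
      borderedMinor M 0 0 * borderedMinor M 1 1 - borderedMinor M 0 1 * borderedMinor M 1 0 := by
  have hsyl := sylvester_identity M h
  rw [Matrix.det_fin_two, Fintype.card_fin] at hsyl
  simp only [Matrix.of_apply] at hsyl
  refine mul_right_cancel₀ h ?_
  linear_combination -hsyl

end Determinants

section TodaLattice

variable {R A : Type*} [CommRing R] [CommRing A] [Algebra R A]

/-- The determinant of the upper left `n × n` block of an infinite matrix. -/
def leadingMinor (M : Matrix ℕ ℕ A) (n : ℕ) : A :=
  (M.submatrix ((↑) : Fin n → ℕ) ((↑) : Fin n → ℕ)).det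

/-- The indices `0, …, n - 1` followed by the index `a`. -/
def borderIndex (n a : ℕ) : Fin n ⊕ Unit → ℕ :=
  Sum.elim (↑) fun _ => a

/-- The determinant of the upper left `n × n` block of an infinite matrix bordered by the row `a`
and the column `b`. -/
def borderedLeadingMinor (M : Matrix ℕ ℕ A) (n a b : ℕ) : A :=
  (M.submatrix (borderIndex n a) (borderIndex n b)).det

theorem leadingMinor_succ (M : Matrix ℕ ℕ A) (n : ℕ) :
    leadingMinor M (n + 1) = borderedLeadingMinor M n n n := by
  let e : Fin n ⊕ Unit ≃ Fin (n + 1) :=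
    (Equiv.sumCongr (Equiv.refl _) (Equiv.ofUnique Unit (Fin 1))).trans finSumFinEquiv
  have he : ((↑) : Fin (n + 1) → ℕ) ∘ e = borderIndex n n := by
    ext (i | i) <;> simp [e, borderIndex]
  rw [leadingMinor, borderedLeadingMinor, ← Matrix.det_submatrix_equiv_self e,
    Matrix.submatrix_submatrix, he]

theorem leadingMinor_add_two_mul [IsDomain A] (M : Matrix ℕ ℕ A) (n : ℕ)
    (h : leadingMinor M n ≠ 0) : leadingMinor M (n + 2) * leadingMinor M n =
      borderedLeadingMinor M n n n * borderedLeadingMinor M n (n + 1) (n + 1) -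
        borderedLeadingMinor M n n (n + 1) * borderedLeadingMinor M n (n + 1) n := by
  let e : Fin n ⊕ Fin 2 → ℕ := Sum.elim (↑) fun i => n + i
  have he : ((↑) : Fin (n + 2) → ℕ) ∘ finSumFinEquiv = e := by
    ext (i | i) <;> simp [e]
  have hborder (i : Fin 2) : e ∘ Sum.map id (fun _ : Unit => i) = borderIndex n (n + i) := by
    ext (_ | _) <;> rfl
  have hminor (i j : Fin 2) : borderedMinor (M.submatrix e e) i j =
      borderedLeadingMinor M n (n + i) (n + j) := by
    rw [borderedMinor, Matrix.submatrix_submatrix, hborder, hborder, borderedLeadingMinor]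
  have hdet : (M.submatrix e e).det = leadingMinor M (n + 2) := by
    rw [← he, ← Matrix.submatrix_submatrix, Matrix.det_submatrix_equiv_self, leadingMinor]
  have hdesnanot := desnanot_jacobi (M.submatrix e e) h
  simp only [hminor, hdet] at hdesnanot
  exact hdesnanot

theorem borderedLeadingMinor_comm {M : Matrix ℕ ℕ A} (hM : M.IsSymm) (n a b : ℕ) :
    borderedLeadingMinor M n a b = borderedLeadingMinor M n b a := by
  rw [borderedLeadingMinor, ← Matrix.det_transpose, Matrix.transpose_submatrix, hM.eq,
    borderedLeadingMinor]

variable {M : Matrix ℕ ℕ A} {c : ℕ → A} {D : Derivation R A A}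

/- The derivative of the row `i < n` contributes its multiple by `c i` and the row `i + 1`, which
already occurs; only the bordering row moves. -/
theorem derivation_borderedLeadingMinor (hD : ∀ i j, D (M i j) = M (i + 1) j + c i * M i j)
    (n b : ℕ) : D (borderedLeadingMinor M n n b) = borderedLeadingMinor M n (n + 1) b +
      (∑ i ∈ range (n + 1), c i) * borderedLeadingMinor M n n b := by
  set B := M.submatrix (borderIndex n n) (borderIndex n b) with hB
  have hrow (j : Fin n ⊕ Unit) : (B.updateRow j fun k => D (B j k)).det =
      (B.updateRow j fun k => M (borderIndex n n j + 1) (borderIndex n b k)).det +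
        c (borderIndex n n j) * B.det := by
    have h : (fun k => D (B j k)) = (fun k => M (borderIndex n n j + 1) (borderIndex n b k)) +
        c (borderIndex n n j) • B j := by
      funext k
      simp [hB, hD]
    rw [h, Matrix.det_updateRow_add, Matrix.det_updateRow_smul, Matrix.updateRow_eq_self]
  have hupper (i : Fin n) : (B.updateRow (Sum.inl i) fun k =>
      M (borderIndex n n (Sum.inl i) + 1) (borderIndex n b k)).det = 0 := by
    obtain ⟨j, hji, hj⟩ : ∃ j, j ≠ Sum.inl i ∧ borderIndex n n j = i + 1 := by
      by_cases hi : (i : ℕ) + 1 < n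
      · exact ⟨Sum.inl ⟨i + 1, hi⟩, by simp [Fin.ext_iff], rfl⟩
      · exact ⟨Sum.inr (), by simp, by simp [borderIndex]; omega⟩
    refine Matrix.det_zero_of_row_eq hji.symm ?_
    rw [Matrix.updateRow_self, Matrix.updateRow_ne hji]
    funext k
    rw [hB, Matrix.submatrix_apply, hj]
    rfl
  have hlast : (B.updateRow (Sum.inr ()) fun k =>
      M (borderIndex n n (Sum.inr ()) + 1) (borderIndex n b k)).det =
        borderedLeadingMinor M n (n + 1) b := by
    congr 1
    ext (i | i) k
    · rw [Matrix.updateRow_ne (by simp)]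
      rfl
    · rw [Matrix.updateRow_self]
      rfl
  have hsum : ∑ j, c (borderIndex n n j) = ∑ i ∈ range (n + 1), c i := by
    rw [Fintype.sum_sum_type, sum_range_succ, ← Fin.sum_univ_eq_sum_range]
    simp [borderIndex]
  rw [borderedLeadingMinor, derivation_det, sum_congr rfl fun j _ => hrow j, sum_add_distrib,
    Fintype.sum_sum_type, sum_eq_zero fun i _ => hupper i, zero_add, ← sum_mul, hsum,
    Fintype.sum_unique (ι := Unit)]
  exact congrArg (· + _) hlast

theorem leadingMinor_toda [IsDomain A] (hM : M.IsSymm)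
    (hD : ∀ i j, D (M i j) = M (i + 1) j + c i * M i j) (hc : ∀ i, D (c i) = 0) {n : ℕ}
    (h : leadingMinor M n ≠ 0) :
    leadingMinor M (n + 2) * leadingMinor M n =
      leadingMinor M (n + 1) * D (D (leadingMinor M (n + 1))) - D (leadingMinor M (n + 1)) ^ 2 := by
  have hfirst := derivation_borderedLeadingMinor hD n n
  have hsecond := derivation_borderedLeadingMinor hD n (n + 1)
  rw [borderedLeadingMinor_comm hM n n (n + 1)] at hsecond
  rw [leadingMinor_add_two_mul M n h, borderedLeadingMinor_comm hM n n (n + 1), leadingMinor_succ,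
    hfirst, map_add, D.leibniz, map_sum, sum_eq_zero fun i _ => hc i, hsecond, hfirst]
  simp only [smul_eq_mul]
  ring

end TodaLattice

open PowerSeries

section PowerSeriesEuler

variable {R : Type*} [CommRing R]

/-- The Euler operator `y d/dy` on power series in `y`. -/
noncomputable def seriesEuler : Derivation R R⟦X⟧ R⟦X⟧ :=
  (X : R⟦X⟧) • derivative R

theorem seriesEuler_apply (f : R⟦X⟧) : seriesEuler f = X * derivative R f := rfl

theorem coeff_seriesEuler (n : ℕ) (f : R⟦X⟧) : coeff n (seriesEuler f) = n * coeff n f := by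
  cases n with
  | zero => simp [seriesEuler_apply]
  | succ n =>
    rw [seriesEuler_apply, coeff_succ_X_mul, coeff_derivative]
    push_cast
    ring

theorem seriesEuler_mul (f g : R⟦X⟧) :
    seriesEuler (f * g) = f * seriesEuler g + g * seriesEuler f :=
  Derivation.leibniz seriesEuler f g

theorem seriesEuler_X_pow (c : ℕ) : seriesEuler (X ^ c : R⟦X⟧) = (c : R⟦X⟧) * X ^ c := by
  ext n
  rw [coeff_seriesEuler, ← map_natCast (C (R := R)), coeff_C_mul, coeff_X_pow]
  split_ifs with h
  · rw [h]
  · rw [mul_zero, mul_zero]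

theorem seriesEuler_natCast (c : ℕ) : seriesEuler (c : R⟦X⟧) = 0 :=
  Derivation.map_natCast _ c

theorem seriesEuler_C_mul (a : R) (f : R⟦X⟧) : seriesEuler (C a * f) = C a * seriesEuler f := by
  ext n
  simp only [coeff_seriesEuler, coeff_C_mul]
  ring

theorem seriesEuler_rescale (a : R) (f : R⟦X⟧) :
    seriesEuler (rescale a f) = rescale a (seriesEuler f) := by
  ext n
  simp only [coeff_seriesEuler, coeff_rescale]
  ring

theorem coeff_mul_congr {n : ℕ} {f f' g g' : R⟦X⟧} (hf : ∀ k ≤ n, coeff k f = coeff k f')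
    (hg : ∀ k ≤ n, coeff k g = coeff k g') : coeff n (f * g) = coeff n (f' * g') := by
  rw [coeff_mul, coeff_mul]
  refine sum_congr rfl fun p hp => ?_
  rw [hf _ (HasAntidiagonal.antidiagonal.fst_le hp),
    hg _ (HasAntidiagonal.antidiagonal.snd_le hp)]

theorem coeff_toda_congr {n : ℕ} {f f' : R⟦X⟧} (h : ∀ k ≤ n, coeff k f = coeff k f') :
    coeff n (f * seriesEuler (seriesEuler f) - seriesEuler f ^ 2) =
      coeff n (f' * seriesEuler (seriesEuler f') - seriesEuler f' ^ 2) := by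
  have h₁ (k : ℕ) (hk : k ≤ n) : coeff k (seriesEuler f) = coeff k (seriesEuler f') := by
    rw [coeff_seriesEuler, coeff_seriesEuler, h k hk]
  have h₂ (k : ℕ) (hk : k ≤ n) :
      coeff k (seriesEuler (seriesEuler f)) = coeff k (seriesEuler (seriesEuler f')) := by
    rw [coeff_seriesEuler, h₁ k hk, ← coeff_seriesEuler]
  rw [map_sub, map_sub, pow_two, pow_two, coeff_mul_congr h h₂, coeff_mul_congr h₁ h₁]

theorem C_mul_rescale_toda (a b : R) (f : R⟦X⟧) :
    C a * rescale b f * seriesEuler (seriesEuler (C a * rescale b f)) -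
        seriesEuler (C a * rescale b f) ^ 2 =
      C (a ^ 2) * rescale b (f * seriesEuler (seriesEuler f) - seriesEuler f ^ 2) := by
  simp only [seriesEuler_C_mul, seriesEuler_rescale, map_mul, map_sub, map_pow]
  ring

theorem X_pow_mul_seriesEuler_sub_sq (c : ℕ) (f : R⟦X⟧) :
    X ^ c * f * seriesEuler (seriesEuler (X ^ c * f)) - seriesEuler (X ^ c * f) ^ 2 =
      (X ^ c) ^ 2 * (f * seriesEuler (seriesEuler f) - seriesEuler f ^ 2) := by
  simp only [seriesEuler_mul, map_add, seriesEuler_X_pow, seriesEuler_natCast]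
  ring

theorem leadingMinor_toda_seriesEuler [IsDomain R] {M : Matrix ℕ ℕ R⟦X⟧} (hM : M.IsSymm)
    (hD : ∀ i j, seriesEuler (M i j) = M (i + 1) j + (i : R⟦X⟧) * M i j) {n : ℕ}
    (h : leadingMinor M n ≠ 0) :
    leadingMinor M (n + 2) * leadingMinor M n =
      leadingMinor M (n + 1) * seriesEuler (seriesEuler (leadingMinor M (n + 1))) -
        seriesEuler (leadingMinor M (n + 1)) ^ 2 :=
  leadingMinor_toda hM hD seriesEuler_natCast h

end PowerSeriesEuler

section Exponentials

/-- The power series `exp (c u)` in `u`. -/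
noncomputable def expSeries (c : ℚ) : ℚ⟦X⟧ :=
  rescale c (exp ℚ)

theorem coeff_expSeries (c : ℚ) (r : ℕ) : coeff r (expSeries c) = c ^ r / r ! := by
  rw [expSeries, coeff_rescale, coeff_exp]
  simp [div_eq_mul_inv]

theorem expSeries_add (a b : ℚ) : expSeries (a + b) = expSeries a * expSeries b :=
  (exp_mul_exp_eq_exp_add a b).symm

theorem expSeries_zero : expSeries 0 = 1 := by
  rw [expSeries, rescale_zero]
  simp

theorem isUnit_expSeries (c : ℚ) : IsUnit (expSeries c) :=
  IsUnit.of_mul_eq_one (expSeries (-c)) (by rw [← expSeries_add, add_neg_cancel, expSeries_zero])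

theorem expSeries_sum {ι : Type*} (s : Finset ι) (f : ι → ℚ) :
    expSeries (∑ i ∈ s, f i) = ∏ i ∈ s, expSeries (f i) := by
  classical
  induction s using Finset.induction_on with
  | empty => rw [sum_empty, prod_empty, expSeries_zero]
  | insert a s ha ih => rw [sum_insert ha, prod_insert ha, expSeries_add, ih]

theorem expSeries_natCast_mul (c : ℚ) (n : ℕ) : expSeries (n * c) = expSeries c ^ n := by
  rw [← nsmul_eq_mul, ← Finset.card_range n, ← sum_const, expSeries_sum, prod_const]

end Exponentials

section TodaEquation

/-- The exponential generating series in `u` of the factorizations of the identity of `Perm (Fin d)`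
into transpositions, divided by `d!`. -/
noncomputable def factorizationSeries (d : ℕ) : ℚ⟦X⟧ :=
  mk fun r => (factorizationCount r (1 : Equiv.Perm (Fin d)) : ℚ) / d ! / r !

/-- The generating series in `y` (outer variable) and `u` (inner variable) of all, possibly
disconnected, branched covers of the projective line with simple branching. -/
noncomputable def coverSeries : ℚ⟦X⟧⟦X⟧ :=
  mk factorizationSeries

/-- The moment matrix whose leading minors approximate `coverSeries`. -/
noncomputable def momentMatrix : Matrix ℕ ℕ ℚ⟦X⟧⟦X⟧ :=
  Matrix.of fun i j => mk fun l =>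
    ((l.descFactorial i * l.descFactorial j : ℚ) / (l ! : ℚ) ^ 2) •
      expSeries ((l : ℚ) * (l - 1) / 2)

theorem isSymm_momentMatrix : momentMatrix.IsSymm := by
  ext i j : 1
  simp only [momentMatrix, Matrix.transpose_apply, Matrix.of_apply, mul_comm]

theorem cast_mul_descFactorial (l i : ℕ) :
    (l : ℚ) * l.descFactorial i = l.descFactorial (i + 1) + i * l.descFactorial i := by
  rcases le_or_gt i l with h | h
  · rw [Nat.descFactorial_succ, Nat.cast_mul, Nat.cast_sub h]
    ring
  · rw [Nat.descFactorial_of_lt h, Nat.descFactorial_of_lt (by omega)]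
    simp

theorem seriesEuler_momentMatrix (i j : ℕ) :
    seriesEuler (momentMatrix i j) =
      momentMatrix (i + 1) j + (i : ℚ⟦X⟧⟦X⟧) * momentMatrix i j := by
  ext l : 1
  rw [map_add, coeff_seriesEuler, ← map_natCast (C (R := ℚ⟦X⟧)), coeff_C_mul]
  simp only [momentMatrix, Matrix.of_apply, coeff_mk, ← map_natCast (C (R := ℚ)),
    ← smul_eq_C_mul, smul_smul, ← add_smul]
  congr 1
  linear_combination (l.descFactorial j : ℚ) / (l ! : ℚ) ^ 2 * cast_mul_descFactorial l i

theorem coeff_leadingMinor_momentMatrix (N n : ℕ) :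
    coeff n (leadingMinor momentMatrix N) = ∑ l ∈ finsuppAntidiag (univ : Finset (Fin N)) n,
      ((∏ i, ((l i).descFactorial i : ℚ)) *
          (Matrix.of fun i j : Fin N => ((l i).descFactorial j : ℚ)).det /
            ∏ i, ((l i)! : ℚ) ^ 2) • expSeries (∑ i, (l i : ℚ) * (l i - 1) / 2) := by
  rw [leadingMinor, ← Matrix.det_transpose, Matrix.det_apply, map_sum]
  simp only [Units.smul_def, map_zsmul, coeff_prod, smul_sum]
  rw [sum_comm]
  refine sum_congr rfl fun l _ => ?_
  rw [← Matrix.det_transpose, Matrix.det_apply', mul_sum, sum_div, sum_smul]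
  refine sum_congr rfl fun κ _ => ?_
  simp only [momentMatrix, Matrix.transpose_apply, Matrix.submatrix_apply, Matrix.of_apply,
    coeff_mk]
  rw [prod_smul, prod_div_distrib, prod_mul_distrib, ← expSeries_sum, ← Int.cast_smul_eq_zsmul ℚ,
    smul_smul]
  congr 1
  ring

/-- The exponential weight of the ground state `l = δ`. -/
noncomputable def groundWeight (N : ℕ) : ℚ :=
  ∑ k ∈ range N, (k : ℚ) * (k - 1) / 2

theorem sum_weight_eq_contentSum_add {N d : ℕ} {l : Fin N →₀ ℕ}
    (hl : ∑ i, l i = ∑ i ∈ range N, i + d) :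
    ∑ i, (l i : ℚ) * (l i - 1) / 2 = groundWeight N + d * (N - 1) + contentSum d l := by
  have hl' : (∑ i, (l i : ℚ)) = ∑ k ∈ range N, (k : ℚ) + d := by
    simpa only [Nat.cast_sum, Nat.cast_add] using congrArg (Nat.cast (R := ℚ)) hl
  simp only [groundWeight, contentSum, ← sum_div, mul_sub, mul_one, sum_sub_distrib, ← pow_two, hl']
  ring

theorem factorizationSeries_eq_sum {N d : ℕ} (hd : d ≤ N) :
    factorizationSeries d = ∑ l ∈ finsuppAntidiag (univ : Finset (Fin N)) (∑ i ∈ range N, i + d),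
      ((∏ i, ((l i).descFactorial i : ℚ)) *
          (Matrix.of fun i j : Fin N => ((l i).descFactorial j : ℚ)).det /
            ∏ i, ((l i)! : ℚ) ^ 2) • expSeries (contentSum d l) := by
  ext r
  rw [factorizationSeries, coeff_mk, factorizationCount_one_div_factorial hd, map_sum, sum_div]
  refine sum_congr rfl fun l _ => ?_
  rw [coeff_smul, coeff_expSeries, smul_eq_mul]
  ring

theorem coeff_add_leadingMinor_momentMatrix {N d : ℕ} (hd : d ≤ N) :
    coeff (∑ i ∈ range N, i + d) (leadingMinor momentMatrix N) =
      expSeries (groundWeight N) * (expSeries (N - 1) ^ d * factorizationSeries d) := by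
  rw [coeff_leadingMinor_momentMatrix, factorizationSeries_eq_sum hd, mul_sum, mul_sum]
  refine sum_congr rfl fun l hl => ?_
  rw [sum_weight_eq_contentSum_add (mem_finsuppAntidiag.1 hl).1, expSeries_add, expSeries_add,
    expSeries_natCast_mul, mul_smul_comm, mul_smul_comm, mul_assoc]

theorem X_pow_dvd_leadingMinor_momentMatrix (N : ℕ) :
    X ^ (∑ i ∈ range N, i) ∣ leadingMinor momentMatrix N := by
  rw [X_pow_dvd_iff]
  intro n hn
  rw [coeff_leadingMinor_momentMatrix]
  refine sum_eq_zero fun l hl => ?_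
  obtain ⟨i, hi⟩ : ∃ i, l i < (i : ℕ) := by
    by_contra! h
    have hle := sum_le_sum (s := univ) fun i _ => h i
    rw [Fin.sum_univ_eq_sum_range (fun x => x), (mem_finsuppAntidiag.1 hl).1] at hle
    omega
  rw [prod_eq_zero (mem_univ i) (by rw [Nat.descFactorial_of_lt hi, Nat.cast_zero]), zero_mul,
    zero_div, zero_smul]

/-- The leading minor of `momentMatrix` without its power of `X`. -/
noncomputable def reducedMinor (N : ℕ) : ℚ⟦X⟧⟦X⟧ :=
  mk fun d => coeff (∑ i ∈ range N, i + d) (leadingMinor momentMatrix N)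

theorem leadingMinor_momentMatrix_eq (N : ℕ) :
    leadingMinor momentMatrix N = X ^ (∑ i ∈ range N, i) * reducedMinor N := by
  obtain ⟨f, hf⟩ := X_pow_dvd_leadingMinor_momentMatrix N
  have h : reducedMinor N = f := by
    ext d : 1
    rw [reducedMinor, coeff_mk, hf, add_comm, coeff_X_pow_mul]
  rw [h, hf]

theorem coeff_reducedMinor {N d : ℕ} (hd : d ≤ N) :
    coeff d (reducedMinor N) =
      coeff d (C (expSeries (groundWeight N)) * rescale (expSeries (N - 1)) coverSeries) := by
  rw [reducedMinor, coeff_mk, coeff_add_leadingMinor_momentMatrix hd, coeff_C_mul, coeff_rescale,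
    coverSeries, coeff_mk]

theorem factorizationSeries_zero : factorizationSeries 0 = 1 := by
  ext r
  rw [factorizationSeries, coeff_mk, coeff_one]
  cases r with
  | zero => simp [factorizationCount_zero]
  | succ r =>
    have : IsEmpty (Transposition (Fin 0)) := ⟨fun τ => by obtain ⟨x, -⟩ := τ.2; exact x.elim0⟩
    simp [factorizationCount_succ]

theorem leadingMinor_momentMatrix_ne_zero (N : ℕ) : leadingMinor momentMatrix N ≠ 0 := by
  intro h
  have hcoeff := coeff_add_leadingMinor_momentMatrix N.zero_le
  rw [h, map_zero, factorizationSeries_zero, pow_zero, mul_one, mul_one] at hcoeff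
  exact (isUnit_expSeries _).ne_zero hcoeff.symm

theorem reducedMinor_toda (n : ℕ) : X * (reducedMinor (n + 2) * reducedMinor n) =
    reducedMinor (n + 1) * seriesEuler (seriesEuler (reducedMinor (n + 1))) -
      seriesEuler (reducedMinor (n + 1)) ^ 2 := by
  have htoda := leadingMinor_toda_seriesEuler isSymm_momentMatrix seriesEuler_momentMatrix
    (leadingMinor_momentMatrix_ne_zero n)
  rw [leadingMinor_momentMatrix_eq (n + 1), X_pow_mul_seriesEuler_sub_sq,
    leadingMinor_momentMatrix_eq, leadingMinor_momentMatrix_eq] at htoda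
  refine mul_left_cancel₀ (pow_ne_zero 2 (pow_ne_zero (∑ i ∈ range (n + 1), i) X_ne_zero)) ?_
  rw [← htoda, sum_range_succ _ (n + 1), sum_range_succ _ n]
  ring

theorem groundWeight_add_two_add (n : ℕ) :
    groundWeight (n + 2) + groundWeight n = groundWeight (n + 1) + groundWeight (n + 1) + n := by
  simp only [groundWeight, sum_range_succ]
  push_cast
  ring

theorem coverSeries_toda :
    X * (rescale (expSeries 1) coverSeries * rescale (expSeries (-1)) coverSeries) =
      coverSeries * seriesEuler (seriesEuler coverSeries) - seriesEuler coverSeries ^ 2 := by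
  ext n : 1
  set a := expSeries (groundWeight (n + 1))
  set b := expSeries n
  have hlevel (N : ℕ) (hN : n ≤ N) (c : ℚ) (hc : (N : ℚ) - 1 = n + c) (k : ℕ) (hk : k ≤ n) :
      coeff k (reducedMinor N) = coeff k (C (expSeries (groundWeight N)) *
        rescale b (rescale (expSeries c) coverSeries)) := by
    rw [coeff_reducedMinor (hk.trans hN), hc, expSeries_add, mul_comm (expSeries _), rescale_mul,
      RingHom.comp_apply]
  have hmid (k : ℕ) (hk : k ≤ n) :
      coeff k (reducedMinor (n + 1)) = coeff k (C a * rescale b coverSeries) := by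
    rw [hlevel (n + 1) n.le_succ 0 (by push_cast; ring) k hk, expSeries_zero, rescale_one,
      RingHom.id_apply]
  have hweight : expSeries (groundWeight (n + 2)) * expSeries (groundWeight n) = a ^ 2 * b := by
    rw [← expSeries_add, groundWeight_add_two_add, expSeries_add, expSeries_add, pow_two]
  have htoda := congrArg (coeff n) (reducedMinor_toda n)
  rw [coeff_mul_congr (fun _ _ => rfl) fun k hk => coeff_mul_congr
      (fun j hj => hlevel (n + 2) (by omega) 1 (by push_cast; ring) j (hj.trans hk))
      (fun j hj => hlevel n le_rfl (-1) (by ring) j (hj.trans hk)),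
    coeff_toda_congr hmid, C_mul_rescale_toda, mul_mul_mul_comm, ← map_mul, hweight, ← map_mul,
    map_mul C, mul_assoc, mul_left_comm X, mul_left_comm X, ← mul_assoc (C b), ← rescale_X,
    ← map_mul, coeff_C_mul, coeff_C_mul, coeff_rescale, coeff_rescale] at htoda
  exact ((isUnit_expSeries _).pow n).mul_left_cancel
    (((isUnit_expSeries _).pow 2).mul_left_cancel htoda)

end TodaEquation

section WordSeries

variable {A B : Type*} [Fintype A] [Fintype B]

/-- The exponential generating series of a function on the words over the alphabet `A`. -/
noncomputable def wordSeries (f : List A → ℚ) : ℚ⟦X⟧ :=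
  mk fun k => (∑ w : Fin k → A, f (List.ofFn w)) / k !

theorem coeff_wordSeries (k : ℕ) (f : List A → ℚ) :
    coeff k (wordSeries f) = (∑ w : Fin k → A, f (List.ofFn w)) / k ! :=
  coeff_mk _ _

theorem wordSeries_sum {ι : Type*} (s : Finset ι) (f : ι → List A → ℚ) :
    wordSeries (fun l => ∑ i ∈ s, f i l) = ∑ i ∈ s, wordSeries (f i) := by
  ext k
  simp only [map_sum, coeff_wordSeries, ← sum_div]
  rw [sum_comm]

theorem wordSeries_comp_map {e : B → A} (he : Function.Injective e) {f : List A → ℚ}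
    (hf : ∀ l, f l ≠ 0 → ∀ a ∈ l, a ∈ Set.range e) :
    wordSeries (fun l => f (l.map e)) = wordSeries f := by
  ext k
  rw [coeff_wordSeries, coeff_wordSeries]
  congr 1
  refine sum_of_injOn (fun w i => e (w i)) (fun v _ w _ h => funext fun i => he (congrFun h i))
    (fun _ _ => mem_coe.2 (mem_univ _)) (fun w _ hw => ?_) fun w _ => by rw [List.map_ofFn]; rfl
  by_contra hne
  choose v hv using fun i => hf _ hne (w i) (List.mem_ofFn.2 ⟨i, rfl⟩)
  exact hw ⟨v, mem_coe.2 (mem_univ _), funext hv⟩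

theorem derivative_wordSeries (f : List A → ℚ) :
    derivative ℚ (wordSeries f) = ∑ a, wordSeries fun l => f (a :: l) := by
  ext k
  rw [coeff_derivative, map_sum]
  simp only [coeff_wordSeries]
  rw [← sum_div, ← (Fin.consEquiv fun _ : Fin (k + 1) => A).sum_comp, Fintype.sum_prod_type,
    Nat.factorial_succ, Nat.cast_mul, Nat.cast_succ, mul_comm (k + 1 : ℚ), ← div_div,
    div_mul_cancel₀ _ (Nat.cast_add_one_ne_zero k)]
  congr! with a _ w _
  exact List.ofFn_cons a w

theorem wordSeries_mul (f : List A → ℚ) (g : List B → ℚ) :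
    wordSeries f * wordSeries g = wordSeries fun l : List (A ⊕ B) =>
      f (l.filterMap Sum.getLeft?) * g (l.filterMap Sum.getRight?) := by
  ext k
  induction k generalizing f g with
  | zero => simp [coeff_mul, coeff_wordSeries]
  | succ k ih =>
    refine mul_right_cancel₀ (Nat.cast_add_one_ne_zero k) ?_
    rw [← coeff_derivative, ← coeff_derivative, Derivation.leibniz]
    simp only [derivative_wordSeries, Fintype.sum_sum_type, smul_eq_mul, mul_sum, map_add, map_sum,
      mul_comm (wordSeries g), sum_mul, ih, Sum.getLeft?_inl, Sum.getLeft?_inr,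
      Sum.getRight?_inl, Sum.getRight?_inr, List.filterMap_cons]
    exact add_comm _ _

end WordSeries

section SumPerm

variable {α β γ : Type*}

/-- The action of a pair of permutations on a type identified with a disjoint union. -/
def sumPerm (e : β ⊕ γ ≃ α) : Perm β × Perm γ →* Perm α :=
  e.permCongrHom.toMonoidHom.comp (Perm.sumCongrHom β γ)

theorem sumPerm_injective (e : β ⊕ γ ≃ α) : Function.Injective (sumPerm e) :=
  e.permCongrHom.injective.comp Perm.sumCongrHom_injective

theorem sumPerm_apply (e : β ⊕ γ ≃ α) (σ : Perm β × Perm γ) (x : β ⊕ γ) :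
    sumPerm e σ (e x) = e (x.map σ.1 σ.2) := by
  change e (Perm.sumCongr σ.1 σ.2 (e.symm (e x))) = _
  rw [e.symm_apply_apply, Perm.sumCongr_apply]

theorem sumPerm_swap_one [DecidableEq α] [DecidableEq β] (e : β ⊕ γ ≃ α) (x y : β) :
    sumPerm e (swap x y, 1) = swap (e (Sum.inl x)) (e (Sum.inl y)) := by
  classical
  rw [← symm_trans_swap_trans, ← Perm.sumCongr_swap_one]
  rfl

theorem sumPerm_one_swap [DecidableEq α] [DecidableEq γ] (e : β ⊕ γ ≃ α) (x y : γ) :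
    sumPerm e (1, swap x y) = swap (e (Sum.inr x)) (e (Sum.inr y)) := by
  classical
  rw [← symm_trans_swap_trans, ← Perm.sumCongr_one_swap]
  rfl

end SumPerm

section Orbits

variable {α β γ : Type*} [DecidableEq α] [DecidableEq β] [DecidableEq γ]

/-- The subgroup generated by the letters of a word in the transpositions. -/
def wordGroup (l : List (Transposition α)) : Subgroup (Perm α) :=
  Subgroup.closure {σ | σ ∈ l.map Subtype.val}

theorem orbit_wordGroup_subset {l : List (Transposition α)} {V : Set α} {a : α} (ha : a ∈ V)
    (hV : ∀ τ ∈ l, ∀ x, τ.1 x ∈ V ↔ x ∈ V) : MulAction.orbit (wordGroup l) a ⊆ V := by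
  rintro _ ⟨⟨σ, hσ⟩, rfl⟩
  have hiff (x : α) : σ x ∈ V ↔ x ∈ V := by
    induction hσ using Subgroup.closure_induction generalizing x with
    | mem σ hσ =>
      obtain ⟨τ, hτ, rfl⟩ := List.mem_map.1 hσ
      exact hV τ hτ x
    | one => rfl
    | mul σ τ _ _ ihσ ihτ => exact (ihσ _).trans (ihτ x)
    | inv σ _ ih => simpa using (ih (σ⁻¹ x)).symm
  exact (hiff a).2 ha

theorem apply_mem_orbit_wordGroup_iff {l : List (Transposition α)} {τ : Transposition α}
    (hτ : τ ∈ l) (a x : α) :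
    τ.1 x ∈ MulAction.orbit (wordGroup l) a ↔ x ∈ MulAction.orbit (wordGroup l) a := by
  let g : wordGroup l := ⟨τ.1, Subgroup.subset_closure (List.mem_map_of_mem hτ)⟩
  change g • x ∈ _ ↔ _
  rw [← MulAction.orbit_eq_iff, ← MulAction.orbit_eq_iff, MulAction.orbit_smul]

/-- The transpositions of `α ≃ β ⊕ γ` within one of the two summands. -/
def sumTransposition (e : β ⊕ γ ≃ α) : Transposition β ⊕ Transposition γ → Transposition α :=
  Sum.elim
    (fun τ => ⟨sumPerm e (τ.1, 1), by
      obtain ⟨_, x, y, hxy, rfl⟩ := τ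
      exact ⟨_, _, by simpa using hxy, sumPerm_swap_one e x y⟩⟩)
    fun τ => ⟨sumPerm e (1, τ.1), by
      obtain ⟨_, x, y, hxy, rfl⟩ := τ
      exact ⟨_, _, by simpa using hxy, sumPerm_one_swap e x y⟩⟩

theorem sumTransposition_injective (e : β ⊕ γ ≃ α) : Function.Injective (sumTransposition e) := by
  have hne {β : Type _} [DecidableEq β] (τ : Transposition β) : τ.1 ≠ 1 := by
    obtain ⟨_, x, y, hxy, rfl⟩ := τ
    exact swap_eq_one_iff.not.2 hxy
  rintro (σ | σ) (τ | τ) h <;>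
    have h' := Prod.ext_iff.1 (sumPerm_injective e (congrArg Subtype.val h))
  · exact congrArg Sum.inl (Subtype.ext h'.1)
  · exact absurd h'.1 (hne σ)
  · exact absurd h'.1.symm (hne τ)
  · exact congrArg Sum.inr (Subtype.ext h'.2)

theorem mem_range_sumTransposition (e : β ⊕ γ ≃ α) {τ : Transposition α}
    (hτ : ∀ x, τ.1 x ∈ Set.range (e ∘ Sum.inl) ↔ x ∈ Set.range (e ∘ Sum.inl)) :
    τ ∈ Set.range (sumTransposition e) := by
  obtain ⟨_, x, y, hxy, rfl⟩ := τ
  obtain ⟨x, rfl⟩ := e.surjective x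
  obtain ⟨y, rfl⟩ := e.surjective y
  have h := hτ (e x)
  rw [swap_apply_left] at h
  rcases x with x | x <;> rcases y with y | y
  · exact ⟨Sum.inl ⟨swap x y, x, y, by simpa using hxy, rfl⟩, Subtype.ext (sumPerm_swap_one e x y)⟩
  · simp at h
  · simp at h
  · exact ⟨Sum.inr ⟨swap x y, x, y, by simpa using hxy, rfl⟩, Subtype.ext (sumPerm_one_swap e x y)⟩

theorem prod_map_sumTransposition (e : β ⊕ γ ≃ α) (l : List (Transposition β ⊕ Transposition γ)) :
    ((l.map (sumTransposition e)).map Subtype.val).prod =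
      sumPerm e (((l.filterMap Sum.getLeft?).map Subtype.val).prod,
        ((l.filterMap Sum.getRight?).map Subtype.val).prod) := by
  induction l with
  | nil => exact (map_one _).symm
  | cons τ l ih =>
    rw [List.map_cons, List.map_cons, List.prod_cons, ih]
    rcases τ with τ | τ
    · exact (map_mul (sumPerm e) (τ.1, 1) _).symm.trans (by simp [List.filterMap_cons])
    · exact (map_mul (sumPerm e) (1, τ.1) _).symm.trans (by simp [List.filterMap_cons])

theorem orbit_wordGroup_map_sumTransposition (e : β ⊕ γ ≃ α)
    (l : List (Transposition β ⊕ Transposition γ)) (b : β) :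
    MulAction.orbit (wordGroup (l.map (sumTransposition e))) (e (Sum.inl b)) =
      (e ∘ Sum.inl) '' MulAction.orbit (wordGroup (l.filterMap Sum.getLeft?)) b := by
  have hmem (τ : Transposition β) : τ ∈ l.filterMap Sum.getLeft? ↔ Sum.inl τ ∈ l := by
    simp [List.mem_filterMap]
  refine subset_antisymm (orbit_wordGroup_subset ⟨b, MulAction.mem_orbit_self b, rfl⟩ ?_)
    (Set.image_subset_iff.2 (orbit_wordGroup_subset (MulAction.mem_orbit_self _) ?_))
  · intro τ hτ x
    obtain ⟨τ, hτl, rfl⟩ := List.mem_map.1 hτ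
    obtain ⟨x, rfl⟩ := e.surjective x
    rcases τ with τ | τ <;>
      simp only [sumTransposition, Sum.elim_inl, Sum.elim_inr, sumPerm_apply] <;>
      rcases x with x | x
    · simpa using apply_mem_orbit_wordGroup_iff ((hmem τ).2 hτl) b x
    all_goals simp
  · intro τ hτ x
    have h := apply_mem_orbit_wordGroup_iff
      (List.mem_map_of_mem (f := sumTransposition e) ((hmem τ).1 hτ))
      (e (Sum.inl b)) (e (Sum.inl x))
    rwa [sumTransposition, Sum.elim_inl, sumPerm_apply] at h

end Orbits

section ConnectedSeries

variable {α β γ : Type*} [DecidableEq α] [DecidableEq β] [DecidableEq γ]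

open Classical in
/-- The indicator function of the words with product the identity. -/
noncomputable def indicatorProdOne (l : List (Transposition α)) : ℚ :=
  if (l.map Subtype.val).prod = 1 then 1 else 0

open Classical in
/-- The indicator function of the words that generate a transitive subgroup. -/
noncomputable def indicatorTransitive (l : List (Transposition α)) : ℚ :=
  if MulAction.IsPretransitive (wordGroup l) α then 1 else 0

open Classical in
/-- The indicator function of the words for which the orbit of `a` is `U`. -/
noncomputable def indicatorOrbit (a : α) (U : Finset α) (l : List (Transposition α)) : ℚ :=
  if MulAction.orbit (wordGroup l) a = U then 1 else 0

theorem sum_indicatorOrbit [Fintype α] (a : α) (l : List (Transposition α)) :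
    ∑ U : Finset α, indicatorOrbit a U l = 1 := by
  classical
  have h (U : Finset α) : MulAction.orbit (wordGroup l) a = U ↔
      (MulAction.orbit (wordGroup l) a).toFinset = U := by
    rw [← coe_inj, Set.coe_toFinset]
  simp only [indicatorOrbit, h]
  rw [sum_ite_eq, if_pos (mem_univ _)]

theorem indicatorOrbit_eq_zero {a : α} {U : Finset α} (ha : a ∉ U) (l : List (Transposition α)) :
    indicatorOrbit a U l = 0 :=
  if_neg fun h => ha (mem_coe.1 (h.subset (MulAction.mem_orbit_self a)))

theorem wordSeries_indicatorOrbit [Fintype α] [Fintype β] [Fintype γ] (e : β ⊕ γ ≃ α) {U : Finset α}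
    (hU : Set.range (e ∘ Sum.inl) = U) {a : α} (ha : a ∈ U) :
    wordSeries (fun l : List (Transposition α) => indicatorProdOne l * indicatorOrbit a U l) =
      wordSeries (fun l : List (Transposition β) => indicatorProdOne l * indicatorTransitive l) *
        wordSeries (indicatorProdOne : List (Transposition γ) → ℚ) := by
  obtain ⟨b, rfl⟩ := hU.symm ▸ mem_coe.2 ha
  have hprod (l : List (Transposition β ⊕ Transposition γ)) :
      indicatorProdOne (l.map (sumTransposition e)) =
        indicatorProdOne (l.filterMap Sum.getLeft?) *
          indicatorProdOne (l.filterMap Sum.getRight?) := by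
    have hiff (σ : Perm β × Perm γ) := map_eq_one_iff (x := σ) (sumPerm e) (sumPerm_injective e)
    simp only [indicatorProdOne, prod_map_sumTransposition, hiff, Prod.mk_eq_one]
    split_ifs <;> simp_all
  have horbit (l : List (Transposition β ⊕ Transposition γ)) :
      indicatorOrbit ((e ∘ Sum.inl) b) U (l.map (sumTransposition e)) =
        indicatorTransitive (l.filterMap Sum.getLeft?) := by
    rw [indicatorOrbit, indicatorTransitive]
    congr 1
    rw [MulAction.isPretransitive_iff_orbit_eq_univ b, Function.comp_apply,
      orbit_wordGroup_map_sumTransposition, ← hU, ← Set.image_univ,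
      (e.injective.comp Sum.inl_injective).image_injective.eq_iff]
  rw [wordSeries_mul, ← wordSeries_comp_map (sumTransposition_injective e)]
  · simp only [hprod, horbit, mul_right_comm]
  · intro l hl τ hτ
    have h : MulAction.orbit (wordGroup l) ((e ∘ Sum.inl) b) = U := by
      by_contra h
      exact hl (by rw [indicatorOrbit, if_neg h, mul_zero])
    refine mem_range_sumTransposition e fun x => ?_
    rw [hU, ← h]
    exact apply_mem_orbit_wordGroup_iff hτ _ x

theorem natCast_mul_wordSeries_indicatorProdOne (d : ℕ) :
    (d : ℚ⟦X⟧) * wordSeries (indicatorProdOne : List (Transposition (Fin d)) → ℚ) =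
      ∑ p ∈ antidiagonal d, (d.choose p.1 : ℚ⟦X⟧) * ((p.1 : ℚ⟦X⟧) *
        wordSeries (fun l : List (Transposition (Fin p.1)) =>
          indicatorProdOne l * indicatorTransitive l) *
        wordSeries (indicatorProdOne : List (Transposition (Fin p.2)) → ℚ)) := by
  let T (n : ℕ) : ℚ⟦X⟧ := wordSeries (indicatorProdOne : List (Transposition (Fin n)) → ℚ)
  let H (n : ℕ) : ℚ⟦X⟧ := wordSeries fun l : List (Transposition (Fin n)) =>
    indicatorProdOne l * indicatorTransitive l
  have horbit (a : Fin d) : T d = ∑ U : Finset (Fin d), if a ∈ U then H #U * T (d - #U) else 0 :=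
    calc T d = wordSeries fun l => ∑ U, indicatorProdOne l * indicatorOrbit a U l := by
          simp only [← mul_sum, sum_indicatorOrbit, mul_one, T]
      _ = _ := by
        rw [wordSeries_sum]
        refine sum_congr rfl fun U _ => ?_
        split_ifs with ha
        · refine wordSeries_indicatorOrbit (finSumEquivOfFinset (s := U) rfl ?_) ?_ ha
          · rw [card_compl, Fintype.card_fin]
          · simp [Function.comp_def]
        · ext k
          simp [indicatorOrbit_eq_zero ha, coeff_wordSeries]
  calc (d : ℚ⟦X⟧) * T d = ∑ _a : Fin d, T d := by simp
    _ = ∑ U : Finset (Fin d), #U * H #U * T (d - #U) := by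
      rw [sum_congr rfl fun a _ => horbit a, sum_comm]
      simp [mul_assoc]
    _ = ∑ j ∈ range (d + 1), (d.choose j : ℚ⟦X⟧) * (j * H j * T (d - j)) := by
      have h := sum_powerset_apply_card (fun j => (j : ℚ⟦X⟧) * H j * T (d - j))
        (x := (univ : Finset (Fin d)))
      rw [powerset_univ, card_univ, Fintype.card_fin] at h
      simpa only [nsmul_eq_mul] using h
    _ = _ := (Nat.sum_antidiagonal_eq_sum_range_succ
      (fun j k => (d.choose j : ℚ⟦X⟧) * (j * H j * T k)) d).symm

/-- The exponential generating series in `u` of the connected branched covers of degree `d`. -/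
noncomputable def connectedSeries (d : ℕ) : ℚ⟦X⟧ :=
  mk fun r => (hurwitzTupleCount d r : ℚ) / d ! / r !

/-- The generating series in `y` (outer variable) and `u` (inner variable) of the connected branched
covers of the projective line with simple branching. -/
noncomputable def connectedCoverSeries : ℚ⟦X⟧⟦X⟧ :=
  mk connectedSeries

theorem wordSeries_indicatorProdOne (d : ℕ) :
    wordSeries (indicatorProdOne : List (Transposition (Fin d)) → ℚ) =
      (d ! : ℚ⟦X⟧) * factorizationSeries d := by
  classical
  ext r
  rw [← map_natCast (C (R := ℚ)), coeff_C_mul, coeff_wordSeries, factorizationSeries, coeff_mk,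
    mul_div_assoc', mul_div_cancel₀ _ (Nat.cast_ne_zero.2 d.factorial_ne_zero)]
  congr 1
  simp only [indicatorProdOne, sum_boole, factorizationCount, Fintype.card_subtype, List.map_ofFn]
  congr!

theorem wordSeries_indicatorTransitive (d : ℕ) :
    wordSeries (fun l : List (Transposition (Fin d)) =>
      indicatorProdOne l * indicatorTransitive l) = (d ! : ℚ⟦X⟧) * connectedSeries d := by
  classical
  ext r
  have hiff (w : Fin r → Transposition (Fin d)) :
      (((List.ofFn w).map Subtype.val).prod = 1 ∧
        MulAction.IsPretransitive (wordGroup (List.ofFn w)) (Fin d)) ↔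
      ((List.ofFn fun i => (w i).1).prod = 1 ∧ ∀ x y : Fin d,
        ∃ σ ∈ Subgroup.closure (Set.range fun i => (w i).1), σ x = y) := by
    rw [MulAction.isPretransitive_iff, wordGroup, List.map_ofFn]
    simp [Subgroup.smul_def, List.mem_ofFn, Function.comp_def, Set.range]
  rw [← map_natCast (C (R := ℚ)), coeff_C_mul, coeff_wordSeries, connectedSeries, coeff_mk,
    mul_div_assoc', mul_div_cancel₀ _ (Nat.cast_ne_zero.2 d.factorial_ne_zero)]
  congr 1
  simp only [indicatorProdOne, indicatorTransitive, ite_mul, one_mul, zero_mul, ← ite_and]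
  rw [sum_boole, ← Fintype.card_subtype, ← Nat.card_eq_fintype_card, hurwitzTupleCount]
  refine congrArg _ (Nat.card_congr ?_)
  refine (Equiv.subtypeEquiv Equiv.subtypePiEquivPi.symm fun w => ?_).trans
    (Equiv.subtypeSubtypeEquivSubtypeInter (fun τ : Fin r → Perm (Fin d) => ∀ i, (τ i).IsSwap) _)
  exact hiff w

theorem seriesEuler_coverSeries :
    seriesEuler coverSeries = coverSeries * seriesEuler connectedCoverSeries := by
  ext d : 1
  have hd : (d ! : ℚ⟦X⟧) ≠ 0 := by
    rw [← map_natCast (C (R := ℚ)), Ne, map_eq_zero_iff _ C_injective, Nat.cast_eq_zero]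
    exact d.factorial_ne_zero
  refine mul_left_cancel₀ hd ?_
  have h := natCast_mul_wordSeries_indicatorProdOne d
  simp only [wordSeries_indicatorProdOne, wordSeries_indicatorTransitive] at h
  rw [coeff_seriesEuler, mul_comm coverSeries, coeff_mul, coverSeries, coeff_mk,
    mul_left_comm, h, mul_sum]
  refine sum_congr rfl fun p hp => ?_
  obtain rfl := HasAntidiagonal.mem_antidiagonal.1 hp
  have hchoose : ((p.1 + p.2).choose p.1 * p.1 ! * p.2 ! : ℚ⟦X⟧) = (p.1 + p.2)! := by
    exact_mod_cast congrArg (Nat.cast (R := ℚ⟦X⟧))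
      (Nat.choose_symm_add ▸ Nat.add_choose_mul_factorial_mul_factorial p.1 p.2)
  rw [coeff_seriesEuler, connectedCoverSeries, coeff_mk, coeff_mk, ← hchoose]
  ring

end ConnectedSeries

section EvenShift

variable {R : Type*} [CommRing R]

/-- The submodule `X ^ s * R⟦X ^ 2⟧` of the power series supported on `s, s + 2, s + 4, …`. -/
def evenShift (R : Type*) [CommRing R] (s : ℕ) : Submodule R R⟦X⟧ where
  carrier := {f | ∀ r, coeff r f ≠ 0 → ∃ a, r = 2 * a + s}
  zero_mem' r h := absurd (map_zero _) h
  add_mem' {f g} hf hg r h := by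
    by_cases hr : coeff r f = 0
    · exact hg r fun h' => h (by rw [map_add, hr, h', add_zero])
    · exact hf r hr
  smul_mem' c f hf r h := hf r fun h' => h (by rw [coeff_smul, h', smul_zero])

theorem one_mem_evenShift : (1 : R⟦X⟧) ∈ evenShift R 0 := fun r h =>
  ⟨0, by by_contra hr; exact h (by rw [coeff_one, if_neg hr])⟩

variable {s t : ℕ} {f g : R⟦X⟧}

theorem mul_mem_evenShift (hf : f ∈ evenShift R s) (hg : g ∈ evenShift R t) :
    f * g ∈ evenShift R (s + t) := by
  intro r hr
  rw [coeff_mul] at hr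
  obtain ⟨p, hp, hne⟩ := exists_ne_zero_of_sum_ne_zero hr
  obtain ⟨a, ha⟩ := hf _ (left_ne_zero_of_mul hne)
  obtain ⟨b, hb⟩ := hg _ (right_ne_zero_of_mul hne)
  exact ⟨a + b, by rw [← HasAntidiagonal.mem_antidiagonal.1 hp, ha, hb]; ring⟩

theorem coeff_mul_of_mem_evenShift (hf : f ∈ evenShift R s) (hg : g ∈ evenShift R t) (b : ℕ) :
    coeff (2 * b + (s + t)) (f * g) =
      ∑ p ∈ antidiagonal b, coeff (2 * p.1 + s) f * coeff (2 * p.2 + t) g := by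
  rw [coeff_mul]
  refine (sum_of_injOn (fun p : ℕ × ℕ => (2 * p.1 + s, 2 * p.2 + t)) ?_ ?_ ?_ fun _ _ => rfl).symm
  · rintro ⟨_, _⟩ - ⟨_, _⟩ - h
    grind
  · rintro ⟨_, _⟩ h
    rw [mem_coe, HasAntidiagonal.mem_antidiagonal] at h ⊢
    grind
  · rintro ⟨i, j⟩ hij hnot
    by_contra hne
    obtain ⟨a, rfl⟩ := hf _ (left_ne_zero_of_mul hne)
    obtain ⟨c, rfl⟩ := hg _ (right_ne_zero_of_mul hne)
    rw [HasAntidiagonal.mem_antidiagonal] at hij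
    exact hnot ⟨(a, c), HasAntidiagonal.mem_antidiagonal.2 (by omega), rfl⟩

/-- The part of genus `g` of a series in `y` (outer variable) and `u` (inner variable): the
coefficients of `y ^ n * u ^ (2 * g + 2 * n)`. -/
noncomputable def genusPart (g : ℕ) (F : R⟦X⟧⟦X⟧) : R⟦X⟧ :=
  mk fun n => coeff (2 * g + 2 * n) (coeff n F)

theorem coeff_genusPart (g n : ℕ) (F : R⟦X⟧⟦X⟧) :
    coeff n (genusPart g F) = coeff (2 * g + 2 * n) (coeff n F) :=
  coeff_mk _ _

theorem genusPart_mul {F G : R⟦X⟧⟦X⟧} (hF : ∀ n, coeff n F ∈ evenShift R (2 * n))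
    (hG : ∀ n, coeff n G ∈ evenShift R (2 * n)) (g : ℕ) :
    genusPart g (F * G) = ∑ p ∈ antidiagonal g, genusPart p.1 F * genusPart p.2 G := by
  ext n
  have hcoeff (q : ℕ × ℕ) (hq : q ∈ antidiagonal n) :
      coeff (2 * g + 2 * n) (coeff q.1 F * coeff q.2 G) = ∑ p ∈ antidiagonal g,
        coeff q.1 (genusPart p.1 F) * coeff q.2 (genusPart p.2 G) := by
    simp only [coeff_genusPart]
    rw [← HasAntidiagonal.mem_antidiagonal.1 hq, mul_add 2 q.1,
      coeff_mul_of_mem_evenShift (hF q.1) (hG q.2)]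
  rw [coeff_genusPart, coeff_mul, map_sum, sum_congr rfl hcoeff, sum_comm, map_sum]
  simp only [coeff_mul]

theorem genusPart_seriesEuler (g : ℕ) (F : R⟦X⟧⟦X⟧) :
    genusPart g (seriesEuler F) = seriesEuler (genusPart g F) := by
  ext n
  rw [coeff_genusPart, coeff_seriesEuler, coeff_seriesEuler, coeff_genusPart,
    ← map_natCast (C (R := R)), coeff_C_mul]

end EvenShift

section ConnectedToda

/-- The series `y⁻¹ D² H`, where `H` is `connectedCoverSeries` and `D` is `y d/dy`; the Toda
equation identifies it with the quotient `τ₊ τ₋ / τ²` of the shifts of `τ = coverSeries`. -/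
noncomputable def todaRatio : ℚ⟦X⟧⟦X⟧ :=
  mk fun n => (n + 1 : ℕ) ^ 2 * connectedSeries (n + 1)

theorem X_mul_todaRatio :
    X * todaRatio = seriesEuler (seriesEuler connectedCoverSeries) := by
  ext n : 1
  rw [coeff_seriesEuler, coeff_seriesEuler, connectedCoverSeries, coeff_mk]
  cases n with
  | zero => simp
  | succ n => rw [coeff_succ_X_mul, todaRatio, coeff_mk, pow_two, mul_assoc]

theorem coverSeries_ne_zero : coverSeries ≠ 0 := fun h => one_ne_zero <|
  factorizationSeries_zero.symm.trans
    (by rw [← coeff_mk 0 factorizationSeries, ← coverSeries, h, map_zero])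

theorem rescale_coverSeries_mul :
    rescale (expSeries 1) coverSeries * rescale (expSeries (-1)) coverSeries =
      coverSeries ^ 2 * todaRatio := by
  have hcover : coverSeries * seriesEuler (seriesEuler coverSeries) - seriesEuler coverSeries ^ 2 =
      coverSeries ^ 2 * seriesEuler (seriesEuler connectedCoverSeries) := by
    rw [seriesEuler_coverSeries, seriesEuler_mul, seriesEuler_coverSeries]
    ring
  refine mul_left_cancel₀ X_ne_zero ?_
  rw [coverSeries_toda, hcover, ← X_mul_todaRatio]
  ring

theorem seriesEuler_eq_of_mul_eq_sq_mul {R : Type*} [CommRing R] [IsDomain R]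
    {t t₁ t₂ f l l₁ l₂ : R⟦X⟧} (ht : t ≠ 0) (h : t₁ * t₂ = t ^ 2 * f)
    (hl : seriesEuler t = t * l) (hl₁ : seriesEuler t₁ = t₁ * l₁)
    (hl₂ : seriesEuler t₂ = t₂ * l₂) :
    seriesEuler f = f * (l₁ + l₂ - 2 * l) := by
  have hD := congrArg seriesEuler h
  rw [pow_two, seriesEuler_mul, seriesEuler_mul, seriesEuler_mul, hl, hl₁, hl₂] at hD
  refine mul_left_cancel₀ (pow_ne_zero 2 ht) ?_
  linear_combination (l₁ + l₂) * h - hD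

/-- The second difference of a series in `y` under the rescalings of `y` by `exp u` and
`exp (-u)`. -/
noncomputable def secondDifference (F : ℚ⟦X⟧⟦X⟧) : ℚ⟦X⟧⟦X⟧ :=
  rescale (expSeries 1) F + rescale (expSeries (-1)) F - 2 * F

theorem seriesEuler_todaRatio : seriesEuler todaRatio =
    todaRatio * secondDifference (seriesEuler connectedCoverSeries) := by
  have hshift (c : ℚ) : seriesEuler (rescale (expSeries c) coverSeries) =
      rescale (expSeries c) coverSeries *
        rescale (expSeries c) (seriesEuler connectedCoverSeries) := by
    rw [seriesEuler_rescale, seriesEuler_coverSeries, map_mul]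
  exact seriesEuler_eq_of_mul_eq_sq_mul coverSeries_ne_zero rescale_coverSeries_mul
    seriesEuler_coverSeries (hshift 1) (hshift (-1))

theorem coeff_zero_todaRatio : coeff 0 todaRatio = 1 := by
  have hcover : constantCoeff coverSeries = 1 := factorizationSeries_zero
  have hshift (a : ℚ⟦X⟧) : constantCoeff (rescale a coverSeries) = 1 := by
    rw [← coeff_zero_eq_constantCoeff_apply, coeff_rescale, pow_zero, one_mul,
      coeff_zero_eq_constantCoeff_apply, hcover]
  have h := congrArg constantCoeff rescale_coverSeries_mul
  rw [map_mul, map_mul, map_pow, hshift, hshift, hcover, one_pow, one_mul, one_mul] at h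
  rw [coeff_zero_eq_constantCoeff_apply, h]

/-- The power series `2 cosh (k u) - 2` in `u`. -/
noncomputable def twoCoshSubTwo (k : ℕ) : ℚ⟦X⟧ :=
  expSeries k + expSeries (-k) - 2

theorem coeff_secondDifference (n : ℕ) (F : ℚ⟦X⟧⟦X⟧) :
    coeff n (secondDifference F) = twoCoshSubTwo n * coeff n F := by
  rw [secondDifference, twoCoshSubTwo, map_sub, map_add, coeff_rescale, coeff_rescale,
    ← expSeries_natCast_mul, ← expSeries_natCast_mul, mul_one, mul_neg_one, sub_mul, add_mul,
    ← map_ofNat (C (R := ℚ⟦X⟧)) 2, coeff_C_mul]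

theorem coeff_twoCoshSubTwo (k r : ℕ) :
    coeff r (twoCoshSubTwo k) =
      ((k : ℚ) ^ r + (-k) ^ r) / (r ! : ℚ) - if r = 0 then 2 else 0 := by
  rw [twoCoshSubTwo, map_sub, map_add, coeff_expSeries, coeff_expSeries, ← add_div,
    ← map_ofNat (C (R := ℚ)) 2, coeff_C]

theorem twoCoshSubTwo_mem_evenShift (k : ℕ) : twoCoshSubTwo k ∈ evenShift ℚ 2 := by
  intro r h
  rw [coeff_twoCoshSubTwo] at h
  rcases r.even_or_odd' with ⟨a, rfl | rfl⟩
  · rcases a with _ | a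
    · norm_num at h
    · exact ⟨a, by ring⟩
  · rw [Odd.neg_pow ⟨a, rfl⟩] at h
    simp at h

theorem coeff_twoCoshSubTwo_even (k a : ℕ) :
    coeff (2 * a + 2) (twoCoshSubTwo k) = 2 / (2 * a + 2)! * (k : ℚ) ^ (2 * a + 2) := by
  rw [coeff_twoCoshSubTwo, if_neg (by omega), Even.neg_pow ⟨a + 1, by ring⟩]
  ring

theorem natCast_mul_coeff_todaRatio (n : ℕ) :
    (n : ℚ⟦X⟧) * coeff n todaRatio = ∑ p ∈ antidiagonal n,
      coeff p.1 todaRatio * (twoCoshSubTwo p.2 * ((p.2 : ℚ⟦X⟧) * connectedSeries p.2)) := by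
  rw [← coeff_seriesEuler, seriesEuler_todaRatio, coeff_mul]
  simp only [coeff_secondDifference, coeff_seriesEuler, connectedCoverSeries, coeff_mk]

theorem connectedSeries_mem_evenShift {n : ℕ} (h : coeff n todaRatio ∈ evenShift ℚ (2 * n)) :
    connectedSeries (n + 1) ∈ evenShift ℚ (2 * n) := by
  rw [todaRatio, coeff_mk, ← Nat.cast_pow, ← nsmul_eq_mul, ← Nat.cast_smul_eq_nsmul ℚ] at h
  exact ((evenShift ℚ (2 * n)).smul_mem_iff (Nat.cast_ne_zero.2 (by positivity))).1 h

theorem twoCoshSubTwo_mul_mem_evenShift {n : ℕ}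
    (h : n ≠ 0 → coeff (n - 1) todaRatio ∈ evenShift ℚ (2 * (n - 1))) :
    twoCoshSubTwo n * ((n : ℚ⟦X⟧) * connectedSeries n) ∈ evenShift ℚ (2 * n) := by
  cases n with
  | zero => simp
  | succ n =>
    rw [mul_add_one, add_comm, ← nsmul_eq_mul]
    exact mul_mem_evenShift (twoCoshSubTwo_mem_evenShift _)
      ((evenShift ℚ _).nsmul_mem (connectedSeries_mem_evenShift (h n.succ_ne_zero)) _)

-- The Toda equation expresses the coefficient of `y ^ n` through lower ones, which yields both the
-- parity of the exponents and the bound `r ≥ 2 d - 2` of the Riemann-Hurwitz formula.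
theorem coeff_todaRatio_mem_evenShift (n : ℕ) : coeff n todaRatio ∈ evenShift ℚ (2 * n) := by
  induction n using Nat.strong_induction_on with
  | _ n ih =>
    rcases Nat.eq_zero_or_pos n with rfl | hn
    · exact coeff_zero_todaRatio ▸ one_mem_evenShift
    · have hmem : (n : ℚ⟦X⟧) * coeff n todaRatio ∈ evenShift ℚ (2 * n) := by
        rw [natCast_mul_coeff_todaRatio]
        refine sum_mem fun p hp => ?_
        rw [HasAntidiagonal.mem_antidiagonal] at hp
        rcases Nat.eq_zero_or_pos p.2 with h | h
        · simp [h]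
        · rw [← hp, mul_add]
          exact mul_mem_evenShift (ih _ (by omega))
            (twoCoshSubTwo_mul_mem_evenShift fun _ => ih _ (by omega))
      rw [← nsmul_eq_mul, ← Nat.cast_smul_eq_nsmul ℚ] at hmem
      exact ((evenShift ℚ (2 * n)).smul_mem_iff (Nat.cast_ne_zero.2 hn.ne')).1 hmem

end ConnectedToda

section GenusExpansion

/-- The generating series of the Hurwitz numbers of genus `g`, each divided by the factorial of the
number of branch points. Its constant coefficient has no geometric meaning. -/
noncomputable def genusSeries (g : ℕ) : ℚ⟦X⟧ :=
  mk fun d => hurwitzNumber g d / (2 * g + 2 * d - 2)!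

theorem coeff_connectedSeries_succ (g d : ℕ) :
    coeff (2 * g + 2 * d) (connectedSeries (d + 1)) = coeff (d + 1) (genusSeries g) := by
  rw [connectedSeries, genusSeries, coeff_mk, coeff_mk, hurwitzNumber]
  rfl

/-- The genus `g` part of `todaRatio`. -/
noncomputable def genusRatio (g : ℕ) : ℚ⟦X⟧ :=
  genusPart g todaRatio

theorem X_mul_genusRatio (g : ℕ) :
    X * genusRatio g = seriesEuler (seriesEuler (genusSeries g)) := by
  ext n
  cases n with
  | zero => simp [coeff_seriesEuler]
  | succ n =>
    rw [coeff_succ_X_mul, genusRatio, coeff_genusPart, todaRatio, coeff_mk, coeff_seriesEuler,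
      coeff_seriesEuler, ← Nat.cast_pow, ← map_natCast (C (R := ℚ)), coeff_C_mul,
      coeff_connectedSeries_succ]
    push_cast
    ring

theorem coeff_zero_genusRatio (g : ℕ) : coeff 0 (genusRatio g) = if g = 0 then 1 else 0 := by
  rw [genusRatio, coeff_genusPart, coeff_zero_todaRatio, coeff_one]
  simp

/-- The genus `g` part of the second difference of `connectedCoverSeries`. The coefficients are
those of `2 cosh u - 2`, in which `u` stands for `u * y d/dy`. -/
noncomputable def genusDifference (g : ℕ) : ℚ⟦X⟧ :=
  ∑ p ∈ antidiagonal g,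
    (2 / (2 * p.1 + 2)! : ℚ) • seriesEuler^[2 * p.1 + 2] (genusSeries p.2)

theorem coeff_iterate_seriesEuler (k n : ℕ) (f : ℚ⟦X⟧) :
    coeff n (seriesEuler^[k] f) = (n : ℚ) ^ k * coeff n f := by
  induction k with
  | zero => simp
  | succ k ih => rw [Function.iterate_succ_apply', coeff_seriesEuler, ih, pow_succ', mul_assoc]

theorem coeff_zero_genusDifference (g : ℕ) : coeff 0 (genusDifference g) = 0 := by
  rw [genusDifference, map_sum]
  refine sum_eq_zero fun p _ => ?_
  rw [coeff_smul, coeff_iterate_seriesEuler, Nat.cast_zero, zero_pow (by omega), zero_mul,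
    smul_zero]

theorem genusPart_secondDifference (g : ℕ) :
    genusPart g (secondDifference (seriesEuler connectedCoverSeries)) =
      seriesEuler (genusDifference g) := by
  ext n
  rw [coeff_genusPart, coeff_secondDifference, coeff_seriesEuler, connectedCoverSeries, coeff_mk,
    coeff_seriesEuler, genusDifference, map_sum]
  simp only [coeff_smul, coeff_iterate_seriesEuler]
  cases n with
  | zero => simp
  | succ n =>
    rw [mul_left_comm, ← map_natCast (C (R := ℚ)), coeff_C_mul, mul_add_one, add_comm (2 * n),
      coeff_mul_of_mem_evenShift (twoCoshSubTwo_mem_evenShift _)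
        (connectedSeries_mem_evenShift (coeff_todaRatio_mem_evenShift n))]
    congr 1
    refine sum_congr rfl fun p _ => ?_
    rw [coeff_twoCoshSubTwo_even, coeff_connectedSeries_succ]
    ring

theorem seriesEuler_genusRatio (g : ℕ) : seriesEuler (genusRatio g) =
    ∑ p ∈ antidiagonal g, genusRatio p.1 * seriesEuler (genusDifference p.2) := by
  have hmem (n : ℕ) : coeff n (secondDifference (seriesEuler connectedCoverSeries)) ∈
      evenShift ℚ (2 * n) := by
    rw [coeff_secondDifference, coeff_seriesEuler, connectedCoverSeries, coeff_mk]
    exact twoCoshSubTwo_mul_mem_evenShift fun _ => coeff_todaRatio_mem_evenShift _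
  rw [genusRatio, ← genusPart_seriesEuler, seriesEuler_todaRatio,
    genusPart_mul coeff_todaRatio_mem_evenShift hmem]
  simp only [genusPart_secondDifference, genusRatio]

end GenusExpansion

local notation "𝓓" => seriesEuler

section ClosedForms

theorem coeff_zero_seriesEuler (f : ℚ⟦X⟧) : coeff 0 (𝓓 f) = 0 := by
  rw [coeff_seriesEuler, Nat.cast_zero, zero_mul]

instance : CharZero ℚ⟦X⟧ := algebraRat.charZero _

theorem coeff_ofNat_mul (m n : ℕ) [m.AtLeastTwo] (f : ℚ⟦X⟧) :
    coeff n (ofNat(m) * f) = (ofNat(m) : ℚ) * coeff n f := by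
  rw [← map_ofNat (C (R := ℚ)) m, coeff_C_mul]

theorem seriesEuler_ofNat_mul (m : ℕ) [m.AtLeastTwo] (f : ℚ⟦X⟧) :
    𝓓 (ofNat(m) * f) = ofNat(m) * 𝓓 f := by
  rw [← map_ofNat (C (R := ℚ)) m, seriesEuler_C_mul]

theorem eq_of_seriesEuler_eq {f g : ℚ⟦X⟧} (h : 𝓓 f = 𝓓 g) (h₀ : coeff 0 f = coeff 0 g) :
    f = g := by
  ext n
  rcases eq_or_ne n 0 with rfl | hn
  · exact h₀
  · have hcoeff := congrArg (coeff n) h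
    rw [coeff_seriesEuler, coeff_seriesEuler] at hcoeff
    exact mul_left_cancel₀ (Nat.cast_ne_zero.2 hn) hcoeff

theorem eq_zero_of_seriesEuler_eq_mul {f g : ℚ⟦X⟧} (h : 𝓓 f = f * g) (hg : coeff 0 g = 0)
    (hf : coeff 0 f = 0) : f = 0 := by
  ext n
  induction n using Nat.strong_induction_on with
  | _ n ih =>
    rcases eq_or_ne n 0 with rfl | hn
    · simpa using hf
    · have hcoeff := congrArg (coeff n) h
      rw [coeff_seriesEuler, coeff_mul, sum_eq_zero] at hcoeff
      · exact (mul_eq_zero.1 hcoeff).resolve_left (Nat.cast_ne_zero.2 hn)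
      · intro p hp
        rw [HasAntidiagonal.mem_antidiagonal] at hp
        rcases eq_or_ne p.2 0 with h | h
        · rw [h, hg, mul_zero]
        · rw [ih _ (by omega), map_zero, zero_mul]

/-- The series `T = D² H₀`, the tree function solving `T = y exp T`. -/
noncomputable def treeSeries : ℚ⟦X⟧ := 𝓓 (𝓓 (genusSeries 0))

/-- The series `P = (1 - T)⁻¹` in which `D H₁` and all `H_g` with `g ≥ 2` are polynomials. -/
noncomputable def poleSeries : ℚ⟦X⟧ := (1 - treeSeries)⁻¹

theorem coeff_zero_treeSeries : coeff 0 treeSeries = 0 := coeff_zero_seriesEuler _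

theorem genusDifference_zero : genusDifference 0 = treeSeries := by
  simp [genusDifference, treeSeries]

theorem genusDifference_one :
    12 * genusDifference 1 = 12 * 𝓓 (𝓓 (genusSeries 1)) + 𝓓 (𝓓 treeSeries) := by
  ext n
  simp only [genusDifference, Nat.sum_antidiagonal_eq_sum_range_succ_mk, sum_range_succ,
    sum_range_zero, zero_add, coeff_ofNat_mul, map_add, coeff_smul, coeff_iterate_seriesEuler,
    treeSeries, coeff_seriesEuler, Nat.factorial]
  push_cast
  ring

theorem genusDifference_two :
    360 * genusDifference 2 = 360 * 𝓓 (𝓓 (genusSeries 2)) +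
      30 * 𝓓 (𝓓 (𝓓 (𝓓 (genusSeries 1)))) + 𝓓 (𝓓 (𝓓 (𝓓 treeSeries))) := by
  ext n
  simp only [genusDifference, Nat.sum_antidiagonal_eq_sum_range_succ_mk, sum_range_succ,
    sum_range_zero, zero_add, coeff_ofNat_mul, map_add, coeff_smul, coeff_iterate_seriesEuler,
    treeSeries, coeff_seriesEuler, Nat.factorial]
  push_cast
  ring

theorem seriesEuler_genusRatio_zero : 𝓓 (genusRatio 0) = genusRatio 0 * 𝓓 treeSeries := by
  rw [seriesEuler_genusRatio, Nat.antidiagonal_zero, sum_singleton, genusDifference_zero]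

theorem one_sub_treeSeries_mul_seriesEuler : (1 - treeSeries) * 𝓓 treeSeries = treeSeries := by
  have hX : X * genusRatio 0 = treeSeries := X_mul_genusRatio 0
  have h := congrArg 𝓓 hX
  have hX1 := seriesEuler_X_pow (R := ℚ) 1
  rw [pow_one, Nat.cast_one, one_mul] at hX1
  rw [seriesEuler_mul, seriesEuler_genusRatio_zero, hX1] at h
  linear_combination -h + (1 + 𝓓 treeSeries) * hX

theorem one_sub_treeSeries_mul_poleSeries : (1 - treeSeries) * poleSeries = 1 :=
  PowerSeries.mul_inv_cancel _ (by
    rw [map_sub, map_one, ← coeff_zero_eq_constantCoeff_apply, coeff_zero_treeSeries, sub_zero]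
    exact one_ne_zero)

theorem treeSeries_mul_poleSeries : treeSeries * poleSeries = poleSeries - 1 := by
  linear_combination -one_sub_treeSeries_mul_poleSeries

theorem constantCoeff_poleSeries : constantCoeff poleSeries = 1 := by
  have h := congrArg constantCoeff treeSeries_mul_poleSeries
  rw [map_mul, ← coeff_zero_eq_constantCoeff_apply, coeff_zero_treeSeries, zero_mul, map_sub,
    map_one] at h
  exact (sub_eq_zero.1 h.symm)

theorem seriesEuler_treeSeries : 𝓓 treeSeries = poleSeries - 1 := by
  linear_combination poleSeries * one_sub_treeSeries_mul_seriesEuler -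
    𝓓 treeSeries * one_sub_treeSeries_mul_poleSeries + treeSeries_mul_poleSeries

theorem seriesEuler_poleSeries : 𝓓 poleSeries = poleSeries ^ 3 - poleSeries ^ 2 := by
  have h := congrArg 𝓓 one_sub_treeSeries_mul_poleSeries
  rw [seriesEuler_mul, map_sub, Derivation.map_one_eq_zero, seriesEuler_treeSeries] at h
  linear_combination poleSeries * h - 𝓓 poleSeries * one_sub_treeSeries_mul_poleSeries

theorem seriesEuler_poleSeries_pow (n : ℕ) :
    𝓓 (poleSeries ^ n) = n * (poleSeries ^ (n + 2) - poleSeries ^ (n + 1)) := by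
  rw [Derivation.leibniz_pow, seriesEuler_poleSeries, nsmul_eq_mul, smul_eq_mul]
  cases n with
  | zero => rw [Nat.cast_zero, zero_mul, zero_mul]
  | succ n =>
    rw [Nat.add_sub_cancel]
    ring

theorem seriesEuler_seriesEuler_treeSeries :
    𝓓 (𝓓 treeSeries) = poleSeries ^ 3 - poleSeries ^ 2 := by
  rw [seriesEuler_treeSeries, map_sub, Derivation.map_one_eq_zero, sub_zero,
    seriesEuler_poleSeries]

theorem eq_mul_genusRatio_zero {f g : ℚ⟦X⟧} (h : 𝓓 f = f * 𝓓 treeSeries + genusRatio 0 * 𝓓 g)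
    (hf : coeff 0 f = 0) (hg : coeff 0 g = 0) : f = genusRatio 0 * g := by
  rw [← sub_eq_zero]
  refine eq_zero_of_seriesEuler_eq_mul (g := 𝓓 treeSeries) ?_ (coeff_zero_seriesEuler _) ?_
  · rw [map_sub, seriesEuler_mul, h, seriesEuler_genusRatio_zero]
    ring
  · rw [map_sub, coeff_mul, Nat.antidiagonal_zero, sum_singleton, hf, hg, mul_zero, sub_zero]

theorem genusRatio_one : genusRatio 1 = genusRatio 0 * genusDifference 1 := by
  refine eq_mul_genusRatio_zero ?_ ?_ (coeff_zero_genusDifference 1)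
  · rw [seriesEuler_genusRatio, Nat.sum_antidiagonal_eq_sum_range_succ_mk, sum_range_succ,
      sum_range_one, ← genusDifference_zero, add_comm]
  · rw [coeff_zero_genusRatio, if_neg one_ne_zero]

theorem genusRatio_two :
    2 * genusRatio 2 = genusRatio 0 * (2 * genusDifference 2 + genusDifference 1 ^ 2) := by
  have hsum : 𝓓 (genusRatio 2) = genusRatio 2 * 𝓓 treeSeries +
      genusRatio 1 * 𝓓 (genusDifference 1) + genusRatio 0 * 𝓓 (genusDifference 2) := by
    rw [seriesEuler_genusRatio, Nat.sum_antidiagonal_eq_sum_range_succ_mk, sum_range_succ,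
      sum_range_succ, sum_range_one, ← genusDifference_zero]
    abel
  refine eq_mul_genusRatio_zero ?_ ?_ ?_
  · rw [map_add, seriesEuler_ofNat_mul, seriesEuler_ofNat_mul, hsum, genusRatio_one, pow_two,
      seriesEuler_mul]
    ring
  · rw [coeff_ofNat_mul, coeff_zero_genusRatio, if_neg two_ne_zero, mul_zero]
  · rw [map_add, coeff_ofNat_mul, coeff_zero_genusDifference, pow_two, coeff_mul,
      Nat.antidiagonal_zero, sum_singleton, coeff_zero_genusDifference, mul_zero, mul_zero,
      add_zero]

theorem iterate_seriesEuler_genusSeries_one_two :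
    12 * 𝓓 (𝓓 (genusSeries 1)) = poleSeries ^ 4 - 2 * poleSeries ^ 3 + poleSeries ^ 2 := by
  have hX := X_mul_genusRatio 1
  have hdiff := genusDifference_one
  rw [genusRatio_one, ← mul_assoc, X_mul_genusRatio, ← treeSeries] at hX
  rw [seriesEuler_seriesEuler_treeSeries] at hdiff
  linear_combination -12 * poleSeries * hX + treeSeries * poleSeries * hdiff -
      12 * 𝓓 (𝓓 (genusSeries 1)) * one_sub_treeSeries_mul_poleSeries +
      (poleSeries ^ 3 - poleSeries ^ 2) * treeSeries_mul_poleSeries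

theorem iterate_seriesEuler_genusSeries_one_three :
    12 * 𝓓 (𝓓 (𝓓 (genusSeries 1))) =
      4 * poleSeries ^ 6 - 10 * poleSeries ^ 5 + 8 * poleSeries ^ 4 - 2 * poleSeries ^ 3 := by
  have h := congrArg 𝓓 iterate_seriesEuler_genusSeries_one_two
  simp only [seriesEuler_ofNat_mul, map_add, map_sub, seriesEuler_poleSeries_pow,
    Nat.cast_ofNat] at h
  linear_combination h

theorem iterate_seriesEuler_genusSeries_one_four :
    12 * 𝓓 (𝓓 (𝓓 (𝓓 (genusSeries 1)))) =
      24 * poleSeries ^ 8 - 74 * poleSeries ^ 7 + 82 * poleSeries ^ 6 - 38 * poleSeries ^ 5 +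
        6 * poleSeries ^ 4 := by
  have h := congrArg 𝓓 iterate_seriesEuler_genusSeries_one_three
  simp only [seriesEuler_ofNat_mul, map_add, map_sub, seriesEuler_poleSeries_pow,
    Nat.cast_ofNat] at h
  linear_combination h

theorem seriesEuler_genusSeries_one : 24 * 𝓓 (genusSeries 1) = (poleSeries - 1) ^ 2 := by
  refine eq_of_seriesEuler_eq ?_ ?_
  · rw [pow_two, seriesEuler_mul (poleSeries - 1), map_sub, Derivation.map_one_eq_zero,
      seriesEuler_poleSeries, seriesEuler_ofNat_mul]
    linear_combination 2 * iterate_seriesEuler_genusSeries_one_two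
  · rw [coeff_ofNat_mul, coeff_zero_seriesEuler, coeff_zero_eq_constantCoeff_apply, map_pow,
      map_sub, constantCoeff_poleSeries, map_one, sub_self, mul_zero, zero_pow two_ne_zero]

theorem iterate_seriesEuler_treeSeries_four :
    𝓓 (𝓓 (𝓓 (𝓓 treeSeries))) =
      15 * poleSeries ^ 7 - 35 * poleSeries ^ 6 + 26 * poleSeries ^ 5 - 6 * poleSeries ^ 4 := by
  have hthree : 𝓓 (𝓓 (𝓓 treeSeries)) =
      3 * poleSeries ^ 5 - 5 * poleSeries ^ 4 + 2 * poleSeries ^ 3 := by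
    rw [seriesEuler_seriesEuler_treeSeries, map_sub, seriesEuler_poleSeries_pow,
      seriesEuler_poleSeries_pow]
    push_cast
    ring
  simp only [hthree, map_add, map_sub, seriesEuler_ofNat_mul, seriesEuler_poleSeries_pow,
    Nat.cast_ofNat]
  ring

theorem iterate_seriesEuler_genusSeries_two_two :
    1440 * 𝓓 (𝓓 (genusSeries 2)) =
      245 * poleSeries ^ 9 - 935 * poleSeries ^ 8 + 1375 * poleSeries ^ 7 -
        961 * poleSeries ^ 6 + 312 * poleSeries ^ 5 - 36 * poleSeries ^ 4 := by
  have hX := congrArg (2 * ·) (X_mul_genusRatio 2)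
  have hdiff_one : 12 * genusDifference 1 = poleSeries ^ 4 - poleSeries ^ 3 := by
    rw [genusDifference_one, iterate_seriesEuler_genusSeries_one_two,
      seriesEuler_seriesEuler_treeSeries]
    ring
  have hdiff := genusDifference_two
  rw [iterate_seriesEuler_treeSeries_four] at hdiff
  set Q := 10 * (12 * 𝓓 (𝓓 (𝓓 (𝓓 (genusSeries 1))))) +
    4 * (15 * poleSeries ^ 7 - 35 * poleSeries ^ 6 + 26 * poleSeries ^ 5 - 6 * poleSeries ^ 4) +
    5 * (12 * genusDifference 1) ^ 2 with hQ
  have hsolve : (1 - treeSeries) * (1440 * 𝓓 (𝓓 (genusSeries 2))) = treeSeries * Q := by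
    simp only [mul_left_comm 2 X, genusRatio_two] at hX
    rw [← mul_assoc, X_mul_genusRatio, ← treeSeries] at hX
    linear_combination -720 * hX + 4 * treeSeries * hdiff - treeSeries * hQ
  rw [iterate_seriesEuler_genusSeries_one_four, hdiff_one] at hQ
  linear_combination poleSeries * hsolve + Q * treeSeries_mul_poleSeries +
    (poleSeries - 1) * hQ -
    1440 * 𝓓 (𝓓 (genusSeries 2)) * one_sub_treeSeries_mul_poleSeries

theorem seriesEuler_genusSeries_two :
    1440 * 𝓓 (genusSeries 2) =
      35 * poleSeries ^ 7 - 115 * poleSeries ^ 6 + 137 * poleSeries ^ 5 - 69 * poleSeries ^ 4 +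
        12 * poleSeries ^ 3 := by
  refine eq_of_seriesEuler_eq ?_ ?_
  · simp only [seriesEuler_ofNat_mul, map_add, map_sub, seriesEuler_poleSeries_pow,
      Nat.cast_ofNat]
    linear_combination iterate_seriesEuler_genusSeries_two_two
  · rw [coeff_ofNat_mul, coeff_zero_seriesEuler, coeff_zero_eq_constantCoeff_apply]
    norm_num [constantCoeff_poleSeries, map_ofNat (constantCoeff (R := ℚ))]

theorem coeff_zero_genusSeries_two : coeff 0 (genusSeries 2) = 0 := by
  have : hurwitzTupleCount 0 2 = 0 := by
    rw [hurwitzTupleCount, Nat.card_eq_zero]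
    exact Or.inl ⟨fun τ => (τ.2.1 0).elim fun x _ => x.elim0⟩
  rw [genusSeries, coeff_mk, hurwitzNumber, this, Nat.cast_zero, zero_div, zero_div]

theorem genusSeries_two_eq :
    1440 * genusSeries 2 =
      7 * poleSeries ^ 5 - 20 * poleSeries ^ 4 + 19 * poleSeries ^ 3 - 6 * poleSeries ^ 2 := by
  refine eq_of_seriesEuler_eq ?_ ?_
  · simp only [seriesEuler_ofNat_mul, map_add, map_sub, seriesEuler_poleSeries_pow,
      Nat.cast_ofNat]
    linear_combination seriesEuler_genusSeries_two
  · rw [coeff_ofNat_mul, coeff_zero_genusSeries_two, coeff_zero_eq_constantCoeff_apply]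
    norm_num [constantCoeff_poleSeries, map_ofNat (constantCoeff (R := ℚ))]

theorem poleSeries_sq_mul_seriesEuler_genusSeries_zero :
    2 * poleSeries ^ 2 * 𝓓 (genusSeries 0) = poleSeries ^ 2 - 1 := by
  have hclosed : 2 * 𝓓 (genusSeries 0) = 2 * treeSeries - treeSeries ^ 2 := by
    refine eq_of_seriesEuler_eq ?_ ?_
    · rw [map_sub, pow_two, seriesEuler_mul treeSeries, seriesEuler_ofNat_mul,
        seriesEuler_ofNat_mul, ← treeSeries]
      linear_combination -2 * one_sub_treeSeries_mul_seriesEuler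
    · rw [coeff_ofNat_mul, coeff_zero_seriesEuler, map_sub, coeff_ofNat_mul, pow_two, coeff_mul,
        Nat.antidiagonal_zero, sum_singleton, coeff_zero_treeSeries]
      norm_num
  linear_combination poleSeries ^ 2 * hclosed +
    (2 * poleSeries - (poleSeries - 1) - treeSeries * poleSeries) * treeSeries_mul_poleSeries

theorem genusSeries_two_recursion :
    136 * (4 * 𝓓 (𝓓 (genusSeries 2)) + 6 * 𝓓 (genusSeries 2) + 2 * genusSeries 2) =
      97 * 𝓓 (𝓓 (𝓓 (genusSeries 1))) - 160 * 𝓓 (𝓓 (genusSeries 1)) +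
        1088 * 𝓓 (𝓓 (genusSeries 0) * 𝓓 (genusSeries 2)) -
        920 * (𝓓 (𝓓 (genusSeries 0)) * 𝓓 (genusSeries 2)) +
        46788 * (𝓓 (𝓓 (genusSeries 1)) * 𝓓 (𝓓 (genusSeries 1))) -
        7798 * 𝓓 (𝓓 (𝓓 (genusSeries 1) * 𝓓 (genusSeries 1))) := by
  have b₁ := seriesEuler_genusSeries_one
  have b₂ := iterate_seriesEuler_genusSeries_one_two
  have b₃ := iterate_seriesEuler_genusSeries_one_three
  have c₁ := seriesEuler_genusSeries_two
  have c₂ := iterate_seriesEuler_genusSeries_two_two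
  have a₁c₂ : 2880 * (𝓓 (genusSeries 0) * 𝓓 (𝓓 (genusSeries 2))) =
      (poleSeries ^ 2 - 1) * (245 * poleSeries ^ 7 - 935 * poleSeries ^ 6 +
        1375 * poleSeries ^ 5 - 961 * poleSeries ^ 4 + 312 * poleSeries ^ 3 -
        36 * poleSeries ^ 2) := by
    rw [← poleSeries_sq_mul_seriesEuler_genusSeries_zero]
    linear_combination 2 * 𝓓 (genusSeries 0) * c₂
  have a₂c₁ : 1440 * (treeSeries * 𝓓 (genusSeries 2)) =
      (poleSeries - 1) * (35 * poleSeries ^ 6 - 115 * poleSeries ^ 5 + 137 * poleSeries ^ 4 -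
        69 * poleSeries ^ 3 + 12 * poleSeries ^ 2) := by
    rw [← treeSeries_mul_poleSeries]
    linear_combination treeSeries * c₁
  have b₂b₂ := congrArg (· ^ 2) b₂
  have b₁b₃ := congrArg₂ (· * ·) b₁ b₃
  rw [seriesEuler_mul, seriesEuler_mul, map_add, seriesEuler_mul, ← treeSeries]
  apply mul_left_cancel₀ (OfNat.ofNat_ne_zero 2880 : (2880 : ℚ⟦X⟧) ≠ 0)
  linear_combination 1088 * c₂ + 1632 * c₁ + 544 * genusSeries_two_eq - 23280 * b₃ +
    38400 * b₂ - 1088 * a₁c₂ - 336 * a₂c₁ - 623840 * b₂b₂ + 155960 * b₁b₃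

end ClosedForms

section Coefficients

theorem hurwitzNumber_eq_coeff_mul_factorial (g d : ℕ) :
    hurwitzNumber g d = coeff d (genusSeries g) * (2 * g + 2 * d - 2)! := by
  rw [genusSeries, coeff_mk, div_mul_cancel₀ _ (Nat.cast_ne_zero.2 (Nat.factorial_ne_zero _))]

theorem coeff_mul_eq_sum_Icc {R : Type*} [Semiring R] {f g : R⟦X⟧} {d : ℕ} (hd : d ≠ 0)
    (hf : coeff 0 f = 0) (hg : coeff 0 g = 0) :
    coeff d (f * g) = ∑ i ∈ Icc 1 (d - 1), coeff i f * coeff (d - i) g := by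
  rw [coeff_mul, Nat.sum_antidiagonal_eq_sum_range_succ_mk]
  refine (sum_subset (fun i hi => ?_) fun i hi hi' => ?_).symm
  · rw [mem_Icc] at hi
    exact mem_range.2 (by omega)
  · rw [mem_range] at hi
    rw [mem_Icc] at hi'
    obtain rfl | rfl : i = 0 ∨ i = d := by omega
    · rw [hf, zero_mul]
    · rw [Nat.sub_self, hg, mul_zero]

theorem choose_mul_hurwitzNumber_mul_hurwitzNumber {g h i j : ℕ} (hi : 1 ≤ i) (hj : 1 ≤ j) :
    ((2 * g + 2 * h + 2 * (i + j) - 4).choose (2 * g + 2 * i - 2) : ℚ) *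
        (hurwitzNumber g i * hurwitzNumber h j) =
      (2 * g + 2 * h + 2 * (i + j) - 4)! *
        (coeff i (genusSeries g) * coeff j (genusSeries h)) := by
  have hchoose := Nat.choose_mul_factorial_mul_factorial
    (show 2 * g + 2 * i - 2 ≤ 2 * g + 2 * h + 2 * (i + j) - 4 by omega)
  rw [show 2 * g + 2 * h + 2 * (i + j) - 4 - (2 * g + 2 * i - 2) = 2 * h + 2 * j - 2 by omega]
    at hchoose
  rw [hurwitzNumber_eq_coeff_mul_factorial, hurwitzNumber_eq_coeff_mul_factorial, ← hchoose]
  push_cast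
  ring

theorem sum_choose_mul_hurwitzNumber_zero_two {d : ℕ} (hd : 1 ≤ d) (a b : ℚ) :
    ∑ i ∈ Icc 1 (d - 1), ((2 * d).choose (2 * i - 2) : ℚ) * (a * d - b * i) * i *
        ((d - i : ℕ) : ℚ) * hurwitzNumber 0 i * hurwitzNumber 2 (d - i) =
      (2 * d)! * (a * d * coeff d (𝓓 (genusSeries 0) * 𝓓 (genusSeries 2)) -
        b * coeff d (𝓓 (𝓓 (genusSeries 0)) * 𝓓 (genusSeries 2))) := by
  iterate 2 rw [coeff_mul_eq_sum_Icc (by omega) (coeff_zero_seriesEuler _)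
    (coeff_zero_seriesEuler _)]
  simp only [mul_sum, ← sum_sub_distrib]
  refine sum_congr rfl fun i hi => ?_
  rw [mem_Icc] at hi
  have hchoose := choose_mul_hurwitzNumber_mul_hurwitzNumber (g := 0) (h := 2) hi.1
    (show 1 ≤ d - i by omega)
  rw [show 2 * 0 + 2 * 2 + 2 * (i + (d - i)) - 4 = 2 * d by omega, mul_zero, zero_add] at hchoose
  simp only [coeff_seriesEuler]
  linear_combination (a * d - b * i) * i * ((d - i : ℕ) : ℚ) * hchoose

theorem sum_choose_mul_hurwitzNumber_one_one {d : ℕ} (hd : 1 ≤ d) (a b : ℚ) :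
    ∑ i ∈ Icc 1 (d - 1), ((2 * d).choose (2 * i) : ℚ) *
        (a * i * ((d - i : ℕ) : ℚ) - b * d ^ 2) * i * ((d - i : ℕ) : ℚ) *
          hurwitzNumber 1 i * hurwitzNumber 1 (d - i) =
      (2 * d)! * (a * coeff d (𝓓 (𝓓 (genusSeries 1)) * 𝓓 (𝓓 (genusSeries 1))) -
        b * d ^ 2 * coeff d (𝓓 (genusSeries 1) * 𝓓 (genusSeries 1))) := by
  iterate 2 rw [coeff_mul_eq_sum_Icc (by omega) (coeff_zero_seriesEuler _)
    (coeff_zero_seriesEuler _)]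
  simp only [mul_sum, ← sum_sub_distrib]
  refine sum_congr rfl fun i hi => ?_
  rw [mem_Icc] at hi
  have hchoose := choose_mul_hurwitzNumber_mul_hurwitzNumber (g := 1) (h := 1) hi.1
    (show 1 ≤ d - i by omega)
  rw [show 2 * 1 + 2 * 1 + 2 * (i + (d - i)) - 4 = 2 * d by omega,
    show 2 * 1 + 2 * i - 2 = 2 * i by omega] at hchoose
  simp only [coeff_seriesEuler]
  linear_combination (a * i * ((d - i : ℕ) : ℚ) - b * d ^ 2) * i * ((d - i : ℕ) : ℚ) * hchoose

end Coefficients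

end HurwitzToda

open HurwitzToda

/-- The genus `2` recursion for the Hurwitz numbers, conjectured by Graber–Pandharipande
and proven by Goulden–Jackson:
`H_{2,d} = d²((97/136)d - 20/17) H_{1,d}
  + ∑_{i=1}^{d-1} C(2d, 2i-2) (8d - (115/17)i) i (d-i) H_{0,i} H_{2,d-i}
  + ∑_{i=1}^{d-1} C(2d, 2i) ((11697/34) i(d-i) - (3899/68) d²) i (d-i) H_{1,i} H_{1,d-i}`. -/
theorem genus_two_hurwitz_recursion (d : ℕ) (hd : 1 ≤ d) :
    hurwitzNumber 2 d =
      (d : ℚ) ^ 2 * ((97 / 136) * (d : ℚ) - 20 / 17) * hurwitzNumber 1 d +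
        (∑ i ∈ Finset.Icc 1 (d - 1),
          (Nat.choose (2 * d) (2 * i - 2) : ℚ) * (8 * (d : ℚ) - (115 / 17) * (i : ℚ)) *
            (i : ℚ) * ((d - i : ℕ) : ℚ) * hurwitzNumber 0 i * hurwitzNumber 2 (d - i)) +
        ∑ i ∈ Finset.Icc 1 (d - 1),
          (Nat.choose (2 * d) (2 * i) : ℚ) *
            ((11697 / 34) * (i : ℚ) * ((d - i : ℕ) : ℚ) - (3899 / 68) * (d : ℚ) ^ 2) *
            (i : ℚ) * ((d - i : ℕ) : ℚ) * hurwitzNumber 1 i * hurwitzNumber 1 (d - i) := by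
  have hcoeff := congrArg (PowerSeries.coeff d) genusSeries_two_recursion
  simp only [map_add, map_sub, coeff_ofNat_mul, coeff_seriesEuler] at hcoeff
  rw [sum_choose_mul_hurwitzNumber_zero_two hd, sum_choose_mul_hurwitzNumber_one_one hd,
    hurwitzNumber_eq_coeff_mul_factorial, hurwitzNumber_eq_coeff_mul_factorial,
    show 2 * 2 + 2 * d - 2 = 2 * d + 1 + 1 by omega, show 2 * 1 + 2 * d - 2 = 2 * d by omega,
    Nat.factorial_succ, Nat.factorial_succ]
  push_cast
  linear_combination ((2 * d).factorial : ℚ) / 136 * hcoeff
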